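/- arXiv:0709.2638 — 3 statements merged into one kernel-verified Lean document; each statement's English description precedes it below -/
import Mathlib

section
/- Let u be a non-degenerate 3iet word with parameters ε, l, c. Then u is a fixed point of some primitive substitution over {1,2,3} if and only if there exists ν ∈ (0,1) such that, with J := [νc, ν(c+l)): (P1) every x ∈ J returns to J under T (there is n ≥ 1 with Tⁿ(x) ∈ J) and, denoting by r(x) the least such n, T^{r(x)}(x) = ν·T(x/ν) for all x ∈ J; and (P2) the set of return names {w(z) : z ∈ J} has exactly three elements, where the return name of z ∈ J is the finite word w(z) = v₀v₁⋯v_{r(z)−1} over {1,2,3} with v_i = 1, 2 or 3 according as T^i(z) ∈ [c, c+l−1+ε), [c+l−1+ε, c+ε) or [c+ε, c+l). -/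
/-- The set `ℤ[ε] = {a + bε : a, b ∈ ℤ}`. -/
def Zbr (ε : ℝ) : Set ℝ := {x | ∃ a b : ℤ, x = (a : ℝ) + (b : ℝ) * ε}

/-- The exchange of three intervals on `[c, c+l)` with parameters `ε, l, c`. -/
noncomputable def T3 (ε l c : ℝ) (x : ℝ) : ℝ :=
  if x < c + l - 1 + ε then x + 1 - ε
  else if x < c + ε then x + 1 - 2 * ε
  else x - ε

/-- The letter (1, 2 or 3, coded as 0, 1, 2 in `Fin 3`) coding the position of `x`. -/
noncomputable def letter3 (ε l c : ℝ) (x : ℝ) : Fin 3 :=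
  if x < c + l - 1 + ε then 0 else if x < c + ε then 1 else 2

/-- `u : ℤ → Fin 3` is the 3iet word with parameters `ε, l, c`, coding the orbit of `0`. -/
def IsThreeIetWord (ε l c : ℝ) (u : ℤ → Fin 3) : Prop :=
  ∃ t : ℤ → ℝ, t 0 = 0 ∧ (∀ n, t n ∈ Set.Ico c (c + l)) ∧
    (∀ n, t (n + 1) = T3 ε l c (t n)) ∧ ∀ n, u n = letter3 ε l c (t n)

/-- The extension of a substitution `φ` to finite words, by concatenation. -/
def substWord {A : Type*} (φ : A → List A) (w : List A) : List A := w.flatMap φ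

/-- A substitution is primitive if some power of it maps every letter to a word
containing all letters. -/
def IsPrimitiveSubst {A : Type*} (φ : A → List A) : Prop :=
  ∃ n : ℕ, 1 ≤ n ∧ ∀ a b : A, b ∈ (substWord φ)^[n] [a]

/-- A pointed bidirectional word `u : ℤ → A` is a fixed point of the substitution `φ`. -/
def IsFixedPointSubstZ {A : Type*} (φ : A → List A) (u : ℤ → A) : Prop :=
  ∃ k : ℤ → ℤ, StrictMono k ∧ k 0 = 0 ∧
    (∀ n, k (n + 1) = k n + (φ (u n)).length) ∧
    ∀ n : ℤ, ∀ i : ℕ, (h : i < (φ (u n)).length) → u (k n + i) = (φ (u n)).get ⟨i, h⟩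

/-- The set of return names of points of `J` under the 3iet `T3 ε l c`. -/
noncomputable def returnNames (ε l c : ℝ) (J : Set ℝ) : Set (List (Fin 3)) :=
  {w | ∃ z ∈ J, ∃ r : ℕ, 1 ≤ r ∧ (T3 ε l c)^[r] z ∈ J ∧
    (∀ m : ℕ, 1 ≤ m → m < r → (T3 ε l c)^[m] z ∉ J) ∧
    w = List.ofFn (fun i : Fin r => letter3 ε l c ((T3 ε l c)^[(i : ℕ)] z))}

/-!
Let `T` be the exchange of three intervals, `t` the trajectory of `0` and `φ` a primitive
substitution fixing the coding of `t` through the index map `k`. Just to the left and just to the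
right of a preimage of `c + ε`, orbits read long words that differ only in `1` against `20` (for
the letters `0, 1, 2`). Applying `φ` to both words forces `φ(1)` and `φ(2)φ(0)` to have the same
total translation. Hence, for a suitable `ν`, the increments of `t (k n) - ν * t n` are `d` or
`2 * d` for a constant `d`; since `t` is bounded, `d = 0` and `t (k n) = ν * t n`. By density of
the orbit, `x ↦ ν * x` turns every step of `T` into the passage through a word of `φ`. If `ν < 0`,
one replaces `φ` by its square.

Conversely, such a renormalization by `0 < ν < 1` provides the index map `k`, and `φ` is primitive:
the words `φ^j(a)` have the total translations `ν ^ j * translation ε a`, so they are pairwise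
distinct, hence long, and by minimality of `T` contain every letter.

Finally, the passage times of the renormalization are first return times to `J`. If two towers over
`J` overlapped, then each of the two discontinuities of `T` would be the start of floors of two
towers. There are only three towers, so a single orbit would meet both discontinuities, which the
condition that `l` is not in `ℤ[ε]` excludes.
-/

open Filter Topology Set

section Itinerary

variable {X Y A : Type*} {f : X → X} {code : X → A} {m n : ℕ} {x y : X} {a : A} {v w : List A}

/-- The first `n` letters of the coding of the orbit of `x` under `f`, where a point `y` is coded
by the letter `code y`. A two-sided word `u : ℤ → A` is treated as the coding `u` of the shift
`(· + 1)` on `ℤ`, so that factors of words and codings of orbits are the same notion. -/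
def itinerary (f : X → X) (code : X → A) (n : ℕ) (x : X) : List A :=
  List.ofFn fun i : Fin n => code (f^[i] x)

/-- The coding of the orbit of `x` under `f` starts with the word `w`. -/
def Reads (f : X → X) (code : X → A) (x : X) (w : List A) : Prop :=
  itinerary f code w.length x = w

@[simp]
theorem length_itinerary : (itinerary f code n x).length = n :=
  List.length_ofFn

@[simp]
theorem itinerary_zero : itinerary f code 0 x = [] :=
  List.ofFn_zero

theorem itinerary_succ :
    itinerary f code (n + 1) x = code x :: itinerary f code n (f x) := by
  simp [itinerary, List.ofFn_succ]

theorem itinerary_add :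
    itinerary f code (m + n) x = itinerary f code m x ++ itinerary f code n (f^[m] x) := by
  induction m generalizing x with
  | zero => simp
  | succ m ih => rw [Nat.add_right_comm, itinerary_succ, ih, itinerary_succ]; rfl

theorem mem_itinerary : a ∈ itinerary f code n x ↔ ∃ i < n, code (f^[i] x) = a := by
  simp [itinerary, List.mem_ofFn', Fin.exists_iff]

theorem itinerary_eq_itinerary {g : Y → Y} {code' : Y → A} {y : Y} :
    itinerary f code n x = itinerary g code' n y ↔
      ∀ i < n, code (f^[i] x) = code' (g^[i] y) := by
  simp [itinerary, List.ofFn_inj, funext_iff, Fin.forall_iff]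

theorem itinerary_comp_of_semiconj {g : Y → Y} {t : X → Y} {code' : Y → A}
    (h : Function.Semiconj t f g) :
    itinerary f (code' ∘ t) n x = itinerary g code' n (t x) :=
  itinerary_eq_itinerary.2 fun i _ => congrArg code' (h.iterate_right i x)

theorem reads_itinerary : Reads f code x (itinerary f code n x) := by
  rw [Reads, length_itinerary]

theorem reads_cons : Reads f code x (a :: w) ↔ code x = a ∧ Reads f code (f x) w := by
  rw [Reads, List.length_cons, itinerary_succ, List.cons_eq_cons, Reads]

theorem reads_append :
    Reads f code x (v ++ w) ↔ Reads f code x v ∧ Reads f code (f^[v.length] x) w := by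
  rw [Reads, List.length_append, itinerary_add]
  exact ⟨fun h => List.append_inj h length_itinerary, fun h => congrArg₂ _ h.1 h.2⟩

theorem Reads.mem_of_iterate {i : ℕ} (h : Reads f code x w) (hi : i < w.length) :
    code (f^[i] x) ∈ w :=
  h ▸ mem_itinerary.2 ⟨i, hi, rfl⟩

end Itinerary

section Substitution

variable {A : Type*} {φ : A → List A}

theorem substWord_ne_nil (hφ : ∀ a, φ a ≠ []) {w : List A} (hw : w ≠ []) :
    substWord φ w ≠ [] := by
  obtain ⟨a, ha⟩ := List.exists_mem_of_ne_nil w hw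
  obtain ⟨b, hb⟩ := List.exists_mem_of_ne_nil (φ a) (hφ a)
  exact List.ne_nil_of_mem (List.mem_flatMap.2 ⟨a, ha, hb⟩)

theorem length_le_length_substWord (hφ : ∀ a, φ a ≠ []) (w : List A) :
    w.length ≤ (substWord φ w).length := by
  induction w with
  | nil => rfl
  | cons a w ih =>
    have := List.length_pos_of_ne_nil (hφ a)
    rw [substWord, List.flatMap_cons, List.length_append, List.length_cons]
    exact Nat.add_comm _ _ ▸ Nat.add_le_add this ih

theorem IsPrimitiveSubst.exists_length_ne_one [Nontrivial A] (hφ : IsPrimitiveSubst φ) :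
    ∃ a, (φ a).length ≠ 1 := by
  by_contra! h
  obtain ⟨n, -, hn⟩ := hφ
  have length_substWord (w : List A) : (substWord φ w).length = w.length := by
    simp [substWord, List.length_flatMap, h]
  have length_iterate (a : A) : ((substWord φ)^[n] [a]).length = 1 :=
    Function.Iterate.rec (fun w : List A => w.length = 1) rfl
      (fun w hw => (length_substWord w).trans hw) n
  obtain ⟨a, b, hab⟩ := exists_pair_ne A
  obtain ⟨d, hd⟩ := List.length_eq_one_iff.1 (length_iterate a)
  have mem_eq (b : A) : b = d := by simpa [hd] using hn a b
  exact hab ((mem_eq a).trans (mem_eq b).symm)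

end Substitution

section Renormalization

variable {X A : Type*} {f : X → X} {code : X → A} {φ : A → List A} {D : Set X} {s : X → X}

/-- The map `s` carries each step of the coded dynamical system `f` on `D` to the passage of an
`f`-orbit through a word of the substitution `φ`: the coding of the orbit of `s x` starts with
`φ (code x)`, and after that word the orbit is at `s (f x)`. -/
structure Renormalizes (f : X → X) (code : X → A) (φ : A → List A) (D : Set X) (s : X → X) :
    Prop where
  ne_nil : ∀ a, φ a ≠ []
  reads : ∀ x ∈ D, Reads f code (s x) (φ (code x))
  iterate_eq : ∀ x ∈ D, f^[(φ (code x)).length] (s x) = s (f x)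

theorem Renormalizes.iterate_substWord (h : Renormalizes f code φ D s) (hf : MapsTo f D D)
    {w : List A} {x : X} (hx : x ∈ D) (hw : Reads f code x w) :
    f^[(substWord φ w).length] (s x) = s (f^[w.length] x) := by
  induction w generalizing x with
  | nil => rfl
  | cons a w ih =>
    obtain ⟨rfl, hw'⟩ := reads_cons.1 hw
    rw [substWord, List.flatMap_cons, List.length_append, Nat.add_comm, Function.iterate_add_apply,
      h.iterate_eq x hx]
    exact ih (hf hx) hw'

theorem Renormalizes.reads_substWord (h : Renormalizes f code φ D s) (hf : MapsTo f D D)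
    {w : List A} {x : X} (hx : x ∈ D) (hw : Reads f code x w) :
    Reads f code (s x) (substWord φ w) := by
  induction w generalizing x with
  | nil => rfl
  | cons a w ih =>
    obtain ⟨rfl, hw'⟩ := reads_cons.1 hw
    exact reads_append.2 ⟨h.reads x hx, h.iterate_eq x hx ▸ ih (hf hx) hw'⟩

theorem Renormalizes.iterate (h : Renormalizes f code φ D s) (hf : MapsTo f D D)
    (hs : MapsTo s D D) (j : ℕ) :
    Renormalizes f code (fun a => (substWord φ)^[j] [a]) D s^[j] := by
  induction j with
  | zero =>
    exact ⟨fun a => List.cons_ne_nil a [], fun x _ => reads_cons.2 ⟨rfl, rfl⟩, fun _ _ => rfl⟩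
  | succ j ih =>
    refine ⟨fun a => ?_, fun x hx => ?_, fun x hx => ?_⟩ <;>
      simp only [Function.iterate_succ_apply']
    · exact substWord_ne_nil h.ne_nil (ih.ne_nil a)
    · exact h.reads_substWord hf (hs.iterate j hx) (ih.reads x hx)
    · rw [h.iterate_substWord hf (hs.iterate j hx) (ih.reads x hx), ih.iterate_eq x hx]

theorem Renormalizes.strictMono {u : ℤ → A} {k : ℤ → ℤ}
    (h : Renormalizes (· + 1) u φ univ k) : StrictMono k :=
  strictMono_int_of_lt_succ fun n => by
    rw [← h.iterate_eq n (mem_univ n), add_right_iterate]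
    simpa [List.length_pos_iff] using h.ne_nil (u n)

theorem isFixedPointSubstZ_iff_renormalizes {u : ℤ → A} (hφ : ∀ a, φ a ≠ []) :
    IsFixedPointSubstZ φ u ↔ ∃ k : ℤ → ℤ, k 0 = 0 ∧ Renormalizes (· + 1) u φ univ k := by
  have reads_iff (n : ℤ) (w : List A) :
      Reads (· + 1) u n w ↔ ∀ i : ℕ, (hi : i < w.length) → u (n + i) = w.get ⟨i, hi⟩ := by
    simp [Reads, itinerary, List.ext_get_iff, add_right_iterate]
  constructor
  · rintro ⟨k, -, h0, hk, hread⟩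
    exact ⟨k, h0, hφ, fun n _ => (reads_iff _ _).2 (hread n), fun n _ => by
      simp [add_right_iterate, hk]⟩
  · rintro ⟨k, h0, h⟩
    have hk (n : ℤ) : k (n + 1) = k n + (φ (u n)).length := by
      simpa [add_right_iterate] using (h.iterate_eq n (mem_univ n)).symm
    exact ⟨k, h.strictMono, h0, hk, fun n => (reads_iff _ _).1 (h.reads n (mem_univ n))⟩

/-- Let `s` renormalize `f` on `D`. The tower over `s x` consists of the floors `f^[i] (s x)` for
`i < (φ (code x)).length`; this is the set of the heights `i` at which `w` is such a floor. -/
def towerHeights (f : X → X) (code : X → A) (φ : A → List A) (D : Set X) (s : X → X) (w : X) :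
    Set ℕ :=
  {i | ∃ x ∈ D, i < (φ (code x)).length ∧ f^[i] (s x) = w}

theorem Renormalizes.nontrivial_towerHeights_apply (h : Renormalizes f code φ D s)
    (hf : MapsTo f D D) (hf_inj : InjOn f D) (hs : InjOn s D) {w : X}
    (hw : (towerHeights f code φ D s w).Nontrivial) :
    (towerHeights f code φ D s (f w)).Nontrivial := by
  have exists_next {i : ℕ} {x : X} (hx : x ∈ D) (hi : i < (φ (code x)).length)
      (hxw : f^[i] (s x) = w) : i + 1 ∈ towerHeights f code φ D s (f w) ∨
        i + 1 = (φ (code x)).length ∧ s (f x) = f w := by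
    rw [← hxw, ← Function.iterate_succ_apply' f]
    rcases Nat.lt_or_eq_of_le (Nat.succ_le_of_lt hi) with hi | hi
    · exact Or.inl ⟨x, hx, hi, rfl⟩
    · exact Or.inr ⟨hi, by rw [hi, h.iterate_eq x hx]⟩
  have zero_mem {x : X} (hx : x ∈ D) (hxw : s (f x) = f w) :
      0 ∈ towerHeights f code φ D s (f w) :=
    ⟨f x, hf hx, List.length_pos_of_ne_nil (h.ne_nil _), hxw⟩
  obtain ⟨i, ⟨x, hx, hi, hxw⟩, j, ⟨y, hy, hj, hyw⟩, hij⟩ := hw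
  rcases exists_next hx hi hxw with hi' | ⟨hi', hx'⟩ <;>
    rcases exists_next hy hj hyw with hj' | ⟨hj', hy'⟩
  · exact ⟨_, hi', _, hj', by lia⟩
  · exact ⟨_, hi', 0, zero_mem hy hy', by lia⟩
  · exact ⟨0, zero_mem hx hx', _, hj', by lia⟩
  · obtain rfl : x = y := hf_inj hx hy (hs (hf hx) (hf hy) (hx'.trans hy'.symm))
    exact absurd (hi'.trans hj'.symm) (by lia)

theorem Renormalizes.nontrivial_towerHeights_iterate (h : Renormalizes f code φ D s)
    (hf : MapsTo f D D) (hf_inj : InjOn f D) (hs : InjOn s D) {w : X}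
    (hw : (towerHeights f code φ D s w).Nontrivial) (n : ℕ) :
    (towerHeights f code φ D s (f^[n] w)).Nontrivial :=
  Function.Iterate.rec (fun w => (towerHeights f code φ D s w).Nontrivial) hw
    (fun _ => h.nontrivial_towerHeights_apply hf hf_inj hs) n

end Renormalization

section FirstReturn

variable {X : Type*} {f : X → X} {J : Set X} {x : X} {m n : ℕ}

/-- `n` is the first positive time at which the orbit of `x` under `f` visits `J`. -/
def IsFirstReturn (f : X → X) (J : Set X) (x : X) (n : ℕ) : Prop :=
  1 ≤ n ∧ f^[n] x ∈ J ∧ ∀ m, 1 ≤ m → m < n → f^[m] x ∉ J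

theorem IsFirstReturn.unique (hm : IsFirstReturn f J x m) (hn : IsFirstReturn f J x n) : m = n := by
  by_contra hmn
  rcases Nat.lt_or_gt_of_ne hmn with hlt | hlt
  · exact hn.2.2 m hm.1 hlt hm.2.1
  · exact hm.2.2 n hn.1 hlt hn.2.1

theorem exists_isFirstReturn (hn : 1 ≤ n) (hx : f^[n] x ∈ J) : ∃ n, IsFirstReturn f J x n := by
  classical
  have h : ∃ n, 1 ≤ n ∧ f^[n] x ∈ J := ⟨n, hn, hx⟩
  exact ⟨Nat.find h, (Nat.find_spec h).1, (Nat.find_spec h).2,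
    fun m hm hlt hmem => Nat.find_min h hlt ⟨hm, hmem⟩⟩

theorem exists_isFirstReturn_and_eq_iff {y : X} :
    ((∃ n, 1 ≤ n ∧ f^[n] x ∈ J) ∧ ∀ n, 1 ≤ n → f^[n] x ∈ J →
        (∀ m, 1 ≤ m → m < n → f^[m] x ∉ J) → f^[n] x = y) ↔
      ∃ n, IsFirstReturn f J x n ∧ f^[n] x = y := by
  constructor
  · rintro ⟨⟨n, hn, hx⟩, h⟩
    obtain ⟨m, hm⟩ := exists_isFirstReturn hn hx
    exact ⟨m, hm, h m hm.1 hm.2.1 hm.2.2⟩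
  · rintro ⟨n, hn, rfl⟩
    exact ⟨⟨n, hn.1, hn.2.1⟩, fun m hm hx hmin => by rw [IsFirstReturn.unique ⟨hm, hx, hmin⟩ hn]⟩

end FirstReturn

theorem exists_eqOn_comp_of_ncard_le {X B W : Type*} [Fintype B] {F : X → W} {g : X → B}
    {D : Set X} (hfin : (F '' D).Finite) (hcard : (F '' D).ncard ≤ Fintype.card B)
    (hg : SurjOn g D univ) (hFg : ∀ x ∈ D, ∀ y ∈ D, F x = F y → g x = g y) :
    ∃ φ : B → W, EqOn F (φ ∘ g) D := by
  choose σ hσ hgσ using fun b => hg (mem_univ b)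
  have hinj : Function.Injective (F ∘ σ) := fun b b' h => by
    simpa only [hgσ] using hFg _ (hσ b) _ (hσ b') h
  have hrange : range (F ∘ σ) = F '' D :=
    eq_of_subset_of_ncard_le (range_subset_iff.2 fun b => mem_image_of_mem F (hσ b))
      (by rwa [← image_univ, ncard_image_of_injective _ hinj, ncard_univ,
        Nat.card_eq_fintype_card]) hfin
  refine ⟨F ∘ σ, fun x hx => ?_⟩
  obtain ⟨b, hb⟩ := hrange.symm ▸ mem_image_of_mem F hx
  have hgx : g x = b := by simpa only [hgσ] using (hFg _ (hσ b) x hx hb).symm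
  rw [Function.comp_apply, hgx, hb]

theorem eventually_le_of_le_add (a b : ℝ) : ∀ᶠ h in 𝓝[>] 0, b ≤ a + h → b ≤ a := by
  rcases le_or_gt b a with hle | hlt
  · exact Eventually.of_forall fun _ _ => hle
  · filter_upwards [Ioo_mem_nhdsGT (sub_pos.2 hlt)] with h hh hle
    linarith [hh.2]

theorem nonpos_of_le_sub_of_bddAbove {F : ℕ → ℝ} {d : ℝ} (hF : BddAbove (range F))
    (hd : ∀ n, d ≤ F (n + 1) - F n) : d ≤ 0 := by
  obtain ⟨C, hC⟩ := hF
  have growth (n : ℕ) : n * d ≤ F n - F 0 := by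
    induction n with
    | zero => simp
    | succ n ih =>
      push_cast
      linarith [hd n]
  by_contra! hpos
  obtain ⟨n, hn⟩ := exists_nat_gt ((C - F 0) / d)
  rw [div_lt_iff₀ hpos] at hn
  linarith [growth n, hC (mem_range_self n)]

theorem exists_rotation_mem_of_irrational {ε : ℝ} (hε : Irrational ε) {U : Set ℝ} (hU : IsOpen U)
    (hU_ne : U.Nonempty) : ∃ N : ℕ, ∀ x : ℝ, ∃ n ≤ N, ∃ a : ℤ, x - n * ε + a ∈ U := by
  let V (q : ℤ) : Set ℝ := ⋃ p : ℤ, (fun z => z + q * ε + p) ⁻¹' U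
  have hV_open (q : ℤ) : IsOpen (V q) :=
    isOpen_iUnion fun p => hU.preimage (by fun_prop)
  have hV_cover (z : ℝ) : ∃ q, z ∈ V q := by
    have hdense := dense_addSubgroupClosure_pair_iff.2 (show Irrational (ε / 1) by simpa using hε)
    obtain ⟨g, hg_mem, hg⟩ := hdense.exists_mem_open (hU.preimage (continuous_const_add z))
      (hU_ne.preimage (add_left_surjective z))
    obtain ⟨q, p, rfl⟩ := AddSubgroup.mem_closure_pair.1 hg_mem
    exact ⟨q, mem_iUnion.2 ⟨p, by simpa [add_assoc] using hg⟩⟩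
  obtain ⟨s, hs⟩ := isCompact_Icc.elim_finite_subcover (s := Icc (0 : ℝ) 1) V hV_open
    fun z _ => mem_iUnion.2 (hV_cover z)
  let M := s.sup Int.natAbs
  refine ⟨2 * M, fun x => ?_⟩
  obtain ⟨q, hq, hz⟩ := mem_iUnion₂.1
    (hs ⟨Int.fract_nonneg (x - M * ε), (Int.fract_lt_one _).le⟩)
  obtain ⟨p, hp⟩ := mem_iUnion.1 hz
  have hqM : q.natAbs ≤ M := Finset.le_sup (f := Int.natAbs) hq
  refine ⟨(M - q).toNat, by lia, p - ⌊x - M * ε⌋, ?_⟩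
  have hcast : (((M - q).toNat : ℕ) : ℝ) = M - q := by
    exact_mod_cast Int.toNat_of_nonneg (show (0 : ℤ) ≤ M - q by lia)
  rw [mem_preimage, Int.fract] at hp
  convert hp using 1
  rw [hcast]
  push_cast
  ring

section ThreeIet

variable {ε l c x y : ℝ} {n : ℕ} {w : List (Fin 3)}

/-- The condition `max ε (1 - ε) < l < 1` on the parameters of a three interval exchange: the three
exchanged intervals have the positive lengths `l - 1 + ε`, `1 - l` and `l - ε`. -/
structure ThreeIetLengths (ε l : ℝ) : Prop where
  lt : ε < l
  one_sub_lt : 1 - ε < l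
  lt_one : l < 1

theorem ThreeIetLengths.pos (hL : ThreeIetLengths ε l) : 0 < ε := by
  linarith [hL.one_sub_lt, hL.lt_one]

/-- The translation by which the three interval exchange moves the points coded by a letter. -/
def translation (ε : ℝ) : Fin 3 → ℝ :=
  ![1 - ε, 1 - 2 * ε, -ε]

/-- The sum of the translations along the letters of a word. -/
def displacement (ε : ℝ) (w : List (Fin 3)) : ℝ :=
  (w.map (translation ε)).sum

/-- The left end point of the exchanged interval coded by a letter. -/
def leftEnd (ε l c : ℝ) : Fin 3 → ℝ :=
  ![c, c + l - 1 + ε, c + ε]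

theorem ThreeIetLengths.translation_injective (hL : ThreeIetLengths ε l) :
    Function.Injective (translation ε) := by
  intro a b hab
  fin_cases a <;> fin_cases b <;> simp [translation] at hab ⊢ <;>
    linarith [hL.pos, hL.lt, hL.lt_one]

theorem displacement_append (v w : List (Fin 3)) :
    displacement ε (v ++ w) = displacement ε v + displacement ε w := by
  simp [displacement]

theorem letter3_eq_zero_iff : letter3 ε l c x = 0 ↔ x < c + l - 1 + ε := by
  unfold letter3
  split_ifs <;> simp_all

theorem letter3_eq_one_iff : letter3 ε l c x = 1 ↔ c + l - 1 + ε ≤ x ∧ x < c + ε := by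
  unfold letter3
  split_ifs <;> simp_all

theorem ThreeIetLengths.letter3_eq_two_iff (hL : ThreeIetLengths ε l) :
    letter3 ε l c x = 2 ↔ c + ε ≤ x := by
  have := hL.lt_one
  unfold letter3
  split_ifs <;> simp_all
  linarith

theorem T3_eq_add_translation : T3 ε l c x = x + translation ε (letter3 ε l c x) := by
  unfold T3 letter3
  split_ifs <;> simp only [translation, Matrix.cons_val] <;> ring

theorem ThreeIetLengths.T3_cases (hL : ThreeIetLengths ε l) (c x : ℝ) :
    (letter3 ε l c x = 0 ∧ x < c + l - 1 + ε ∧ T3 ε l c x = x + 1 - ε) ∨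
    (letter3 ε l c x = 1 ∧ c + l - 1 + ε ≤ x ∧ x < c + ε ∧ T3 ε l c x = x + 1 - 2 * ε) ∨
    (letter3 ε l c x = 2 ∧ c + ε ≤ x ∧ T3 ε l c x = x - ε) := by
  have := hL.lt_one
  unfold letter3 T3
  split_ifs <;> simp_all

theorem ThreeIetLengths.letter3_leftEnd (hL : ThreeIetLengths ε l) (a : Fin 3) :
    letter3 ε l c (leftEnd ε l c a) = a := by
  fin_cases a
  · exact letter3_eq_zero_iff.2 (show c < _ by linarith [hL.one_sub_lt])
  · exact letter3_eq_one_iff.2 ⟨le_rfl, show c + l - 1 + ε < _ by linarith [hL.lt_one]⟩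
  · exact hL.letter3_eq_two_iff.2 le_rfl

theorem ThreeIetLengths.leftEnd_mem (hL : ThreeIetLengths ε l) (a : Fin 3) :
    leftEnd ε l c a ∈ Ico c (c + l) := by
  fin_cases a <;> simp only [leftEnd, mem_Ico] <;>
    constructor <;> simp <;> linarith [hL.pos, hL.lt, hL.one_sub_lt, hL.lt_one]

theorem ThreeIetLengths.leftEnd_letter3_le (hL : ThreeIetLengths ε l) (hx : c ≤ x) :
    leftEnd ε l c (letter3 ε l c x) ≤ x := by
  rcases hL.T3_cases c x with ⟨h, -⟩ | ⟨h, h', -⟩ | ⟨h, h', -⟩ <;> rw [h]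
  exacts [hx, h', h']

theorem ThreeIetLengths.mapsTo_T3 (hL : ThreeIetLengths ε l) :
    MapsTo (T3 ε l c) (Ico c (c + l)) (Ico c (c + l)) := by
  rintro x ⟨hxc, hxl⟩
  rcases hL.T3_cases c x with ⟨-, h, e⟩ | ⟨-, h, h', e⟩ | ⟨-, h, e⟩ <;> rw [e] <;>
    constructor <;> linarith [hL.pos, hL.lt, hL.one_sub_lt, hL.lt_one]

theorem ThreeIetLengths.injOn_T3 (hL : ThreeIetLengths ε l) :
    InjOn (T3 ε l c) (Ico c (c + l)) := by
  rintro x ⟨hxc, hxl⟩ y ⟨hyc, hyl⟩ hxy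
  rcases hL.T3_cases c x with ⟨-, h, e⟩ | ⟨-, h, h', e⟩ | ⟨-, h, e⟩ <;>
    rcases hL.T3_cases c y with ⟨-, g, e'⟩ | ⟨-, g, g', e'⟩ | ⟨-, g, e'⟩ <;>
      rw [e, e'] at hxy <;> linarith [hL.pos, hL.lt, hL.lt_one]

theorem ThreeIetLengths.surjOn_T3 (hL : ThreeIetLengths ε l) :
    SurjOn (T3 ε l c) (Ico c (c + l)) (Ico c (c + l)) := by
  rintro y ⟨hyc, hyl⟩
  have T3_eq_of_sub (a : Fin 3) (hx : y - translation ε a ∈ Ico c (c + l))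
      (ha : letter3 ε l c (y - translation ε a) = a) : y ∈ T3 ε l c '' Ico c (c + l) :=
    ⟨_, hx, by rw [T3_eq_add_translation, ha, sub_add_cancel]⟩
  rcases lt_or_ge y (c + l - ε) with hy | hy
  · refine T3_eq_of_sub 2 ?_ (hL.letter3_eq_two_iff.2 ?_) <;>
      simp only [translation, Matrix.cons_val, mem_Ico]
    · constructor <;> linarith [hL.pos]
    · linarith
  rcases lt_or_ge y (c + 1 - ε) with hy' | hy'
  · refine T3_eq_of_sub 1 ?_ (letter3_eq_one_iff.2 ?_) <;>
      simp only [translation, Matrix.cons_val, mem_Ico] <;>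
      constructor <;> linarith [hL.one_sub_lt, hL.lt]
  · refine T3_eq_of_sub 0 ?_ (letter3_eq_zero_iff.2 ?_) <;>
      simp only [translation, Matrix.cons_val, mem_Ico]
    · constructor <;> linarith [hL.lt, hL.lt_one]
    · linarith

end ThreeIet

section Orbits

variable {ε l c x y : ℝ} {i j n : ℕ} {v w : List (Fin 3)}

theorem iterate_T3_eq_add_displacement :
    (T3 ε l c)^[n] x = x + displacement ε (itinerary (T3 ε l c) (letter3 ε l c) n x) := by
  induction n generalizing x with
  | zero => simp [displacement]
  | succ n ih =>
    rw [Function.iterate_succ_apply, ih, itinerary_succ, T3_eq_add_translation]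
    simp only [displacement, List.map_cons, List.sum_cons]
    ring

theorem Reads.iterate_T3 (h : Reads (T3 ε l c) (letter3 ε l c) x w) :
    (T3 ε l c)^[w.length] x = x + displacement ε w := by
  rw [iterate_T3_eq_add_displacement, h]

theorem exists_iterate_T3_eq_add_sub (ε l c : ℝ) (n : ℕ) (x : ℝ) :
    ∃ a b : ℤ, n ≤ b ∧ (T3 ε l c)^[n] x = x + a - b * ε := by
  have exists_translation_eq (d : Fin 3) : ∃ a b : ℤ, 1 ≤ b ∧ translation ε d = a - b * ε := by
    fin_cases d
    exacts [⟨1, 1, by simp [translation]⟩, ⟨1, 2, by simp [translation]⟩,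
      ⟨0, 1, by simp [translation]⟩]
  induction n with
  | zero => exact ⟨0, 0, by simp⟩
  | succ n ih =>
    obtain ⟨a, b, hb, h⟩ := ih
    obtain ⟨a', b', hb', h'⟩ := exists_translation_eq (letter3 ε l c ((T3 ε l c)^[n] x))
    refine ⟨a + a', b + b', by lia, ?_⟩
    rw [Function.iterate_succ_apply', T3_eq_add_translation, h', h]
    push_cast
    ring

theorem iterate_T3_ne_self (hε : Irrational ε) (hn : n ≠ 0) : (T3 ε l c)^[n] x ≠ x := by
  intro h
  obtain ⟨a, b, hb, hab⟩ := exists_iterate_T3_eq_add_sub ε l c n x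
  exact (hε.intCast_mul (show b ≠ 0 by lia)).ne_int a (by linarith)

theorem iterate_T3_injective (hε : Irrational ε) (x : ℝ) :
    Function.Injective fun n => (T3 ε l c)^[n] x :=
  .of_lt_imp_ne fun m n hmn h => by
    have h_return : (T3 ε l c)^[n - m] ((T3 ε l c)^[m] x) = (T3 ε l c)^[m] x := by
      rw [← Function.iterate_add_apply, Nat.sub_add_cancel hmn.le]
      exact h.symm
    exact iterate_T3_ne_self hε (Nat.sub_pos_of_lt hmn).ne' h_return

theorem iterate_T3_ne_of_notMem_Zbr (hnd : l ∉ Zbr ε)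
    (hi : (T3 ε l c)^[i] x = c + ε) : (T3 ε l c)^[j] x ≠ c + l - 1 + ε := by
  intro hj
  obtain ⟨a, b, -, hab⟩ := exists_iterate_T3_eq_add_sub ε l c i x
  obtain ⟨a', b', -, hab'⟩ := exists_iterate_T3_eq_add_sub ε l c j x
  exact hnd ⟨1 + a' - a, b - b', by push_cast; linarith⟩

/-- The exchange of three intervals is induced by a rotation: it follows the orbit of the rotation
by `-ε` modulo `1`, skipping the points outside `[c, c + l)`. -/
theorem ThreeIetLengths.exists_iterate_T3_eq_rotation (hL : ThreeIetLengths ε l)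
    (hx : x ∈ Ico c (c + l)) {a : ℤ} (ha : x - n * ε + a ∈ Ico c (c + l)) :
    ∃ m ≤ n, (T3 ε l c)^[m] x = x - n * ε + a := by
  induction n using Nat.strong_induction_on generalizing x a with
  | _ n ih =>
  have advance {k : ℕ} (hk : k < n) (b : ℤ) (hb : T3 ε l c x - k * ε + b = x - n * ε + a) :
      ∃ m ≤ n, (T3 ε l c)^[m] x = x - n * ε + a := by
    obtain ⟨m, hm, h⟩ := ih k hk (hL.mapsTo_T3 hx) (hb ▸ ha)
    exact ⟨m + 1, by lia, by rw [Function.iterate_succ_apply, h, hb]⟩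
  have int_not_between (h : (0 : ℝ) < a ∧ (a : ℝ) < 1) : False := by
    have : 0 < a ∧ a < 1 := mod_cast h
    lia
  rcases n with _ | n
  · have h : (-1 : ℝ) < a ∧ (a : ℝ) < 1 := by
      have := hL.lt_one
      constructor <;> simp at ha <;> linarith [hx.1, hx.2]
    obtain rfl : a = 0 := by
      have : -1 < a ∧ a < 1 := mod_cast h
      lia
    exact ⟨0, le_rfl, by simp⟩
  rcases hL.T3_cases c x with ⟨-, -, e⟩ | ⟨-, h, h', e⟩ | ⟨-, -, e⟩
  · exact advance n.lt_succ_self (a - 1) (by rw [e]; push_cast; ring)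
  · rcases n with _ | n
    · simp only [zero_add, Nat.cast_one, one_mul, mem_Ico] at ha
      exact (int_not_between ⟨by linarith, by linarith⟩).elim
    · exact advance (show n < n + 2 by lia) (a - 1) (by rw [e]; push_cast; ring)
  · exact advance n.lt_succ_self a (by rw [e]; push_cast; ring)

theorem ThreeIetLengths.exists_bound_iterate_T3_mem (hL : ThreeIetLengths ε l)
    (hε : Irrational ε) {U : Set ℝ} (hU : IsOpen U) (hU_ne : U.Nonempty)
    (hU_sub : U ⊆ Ico c (c + l)) :
    ∃ N, ∀ x ∈ Ico c (c + l), ∃ n ≤ N, (T3 ε l c)^[n] x ∈ U := by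
  obtain ⟨N, hN⟩ := exists_rotation_mem_of_irrational hε hU hU_ne
  refine ⟨N, fun x hx => ?_⟩
  obtain ⟨n, hn, a, ha⟩ := hN x
  obtain ⟨m, hm, h⟩ := hL.exists_iterate_T3_eq_rotation hx (hU_sub ha)
  exact ⟨m, hm.trans hn, h ▸ ha⟩

theorem ThreeIetLengths.exists_bound_of_eventually_nhdsGT (hL : ThreeIetLengths ε l)
    (hε : Irrational ε) (hy : y ∈ Ico c (c + l)) {p : ℝ → Prop} (hp : ∀ᶠ h in 𝓝[>] 0, p (y + h)) :
    ∃ N, ∀ x ∈ Ico c (c + l), ∃ n ≤ N, p ((T3 ε l c)^[n] x) := by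
  have hgap : 0 < c + l - y := sub_pos.2 hy.2
  obtain ⟨b, hb, hsub⟩ := (mem_nhdsGT_iff_exists_Ioo_subset' hgap).1
    (hp.and (Ioo_mem_nhdsGT hgap))
  have mem_of_mem {z : ℝ} (hz : z ∈ Ioo y (y + b)) : p z ∧ z ∈ Ico c (c + l) := by
    obtain ⟨hpz, -, hlt⟩ := @hsub (z - y) ⟨by linarith [hz.1], by linarith [hz.2]⟩
    exact ⟨by simpa using hpz, by linarith [hy.1, hz.1], by linarith⟩
  obtain ⟨N, hN⟩ := hL.exists_bound_iterate_T3_mem hε isOpen_Ioo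
    (nonempty_Ioo.2 (lt_add_of_pos_right y hb)) fun z hz => (mem_of_mem hz).2
  exact ⟨N, fun x hx => (hN x hx).imp fun n hn => ⟨hn.1, (mem_of_mem hn.2).1⟩⟩

theorem ThreeIetLengths.exists_bound_of_eventually_nhdsLT (hL : ThreeIetLengths ε l)
    (hε : Irrational ε) (hy : y ∈ Ioc c (c + l)) {p : ℝ → Prop} (hp : ∀ᶠ h in 𝓝[<] 0, p (y + h)) :
    ∃ N, ∀ x ∈ Ico c (c + l), ∃ n ≤ N, p ((T3 ε l c)^[n] x) := by
  have hgap : c - y < 0 := sub_neg.2 hy.1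
  obtain ⟨a, ha, hsub⟩ := (mem_nhdsLT_iff_exists_Ioo_subset' hgap).1
    (hp.and (Ioo_mem_nhdsLT hgap))
  have mem_of_mem {z : ℝ} (hz : z ∈ Ioo (y + a) y) : p z ∧ z ∈ Ico c (c + l) := by
    obtain ⟨hpz, hlt, -⟩ := @hsub (z - y) ⟨by linarith [hz.1], by linarith [hz.2]⟩
    exact ⟨by simpa using hpz, by linarith, by linarith [hy.2, hz.2]⟩
  obtain ⟨N, hN⟩ := hL.exists_bound_iterate_T3_mem hε isOpen_Ioo
    (nonempty_Ioo.2 (add_lt_of_neg_right y ha)) fun z hz => (mem_of_mem hz).2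
  exact ⟨N, fun x hx => (hN x hx).imp fun n hn => ⟨hn.1, (mem_of_mem hn.2).1⟩⟩

theorem ThreeIetLengths.exists_bound_dist_of_reads (hL : ThreeIetLengths ε l)
    (hε : Irrational ε) (c : ℝ) {δ : ℝ} (hδ : 0 < δ) :
    ∃ N, ∀ w : List (Fin 3), N ≤ w.length → ∀ x ∈ Ico c (c + l), ∀ y ∈ Ico c (c + l),
      Reads (T3 ε l c) (letter3 ε l c) x w → Reads (T3 ε l c) (letter3 ε l c) y w →
        |y - x| < δ := by
  let p := c + l - 1 + ε
  have hp : p ∈ Ioc c (c + l) := ⟨by linarith [hL.one_sub_lt], by linarith [hL.lt, hL.lt_one]⟩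
  obtain ⟨N, hN⟩ := hL.exists_bound_of_eventually_nhdsLT hε hp (p := (· ∈ Ioo (p - δ) p)) <| by
    filter_upwards [Ioo_mem_nhdsLT (neg_lt_zero.2 hδ)] with h hh
    exact ⟨by linarith [hh.1], by linarith [hh.2]⟩
  have sub_lt {w x y} (hw : N < w.length) (hx : x ∈ Ico c (c + l))
      (hxw : Reads (T3 ε l c) (letter3 ε l c) x w)
      (hyw : Reads (T3 ε l c) (letter3 ε l c) y w) : y - x < δ := by
    obtain ⟨n, hn, hmem⟩ := hN x hx
    have same_letter := itinerary_eq_itinerary.1 (hxw.trans hyw.symm)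
    have same_displacement : (T3 ε l c)^[n] y - (T3 ε l c)^[n] x = y - x := by
      rw [iterate_T3_eq_add_displacement, iterate_T3_eq_add_displacement (x := x),
        itinerary_eq_itinerary.2 fun i hi => same_letter i (by lia)]
      ring
    have hlt : (T3 ε l c)^[n] y < p := by
      rw [← letter3_eq_zero_iff, ← same_letter n (by lia)]
      exact letter3_eq_zero_iff.2 hmem.2
    linarith [hmem.1]
  exact ⟨N + 1, fun w hw x hx y hy hxw hyw =>
    abs_sub_lt_iff.2 ⟨sub_lt hw hx hxw hyw, sub_lt hw hy hyw hxw⟩⟩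

end Orbits

section Continuity

variable {ε l c x h : ℝ} {n : ℕ} {F : Filter ℝ}

theorem reads_add_itinerary
    (hx : ∀ i < n, letter3 ε l c ((T3 ε l c)^[i] x + h) = letter3 ε l c ((T3 ε l c)^[i] x)) :
    Reads (T3 ε l c) (letter3 ε l c) (x + h) (itinerary (T3 ε l c) (letter3 ε l c) n x) := by
  induction n generalizing x with
  | zero => rfl
  | succ n ih =>
    have h0 : letter3 ε l c (x + h) = letter3 ε l c x := hx 0 n.succ_pos
    have hT : T3 ε l c (x + h) = T3 ε l c x + h := by
      rw [T3_eq_add_translation, T3_eq_add_translation (x := x), h0]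
      ring
    rw [itinerary_succ, reads_cons, hT]
    exact ⟨h0, ih fun i hi => hx (i + 1) (Nat.succ_lt_succ hi)⟩

theorem eventually_reads_add_itinerary
    (hx : ∀ i < n, ∀ᶠ h in F,
      letter3 ε l c ((T3 ε l c)^[i] x + h) = letter3 ε l c ((T3 ε l c)^[i] x)) :
    ∀ᶠ h in F,
      Reads (T3 ε l c) (letter3 ε l c) (x + h) (itinerary (T3 ε l c) (letter3 ε l c) n x) :=
  ((eventually_all_finite (finite_lt_nat n)).2 hx).mono fun _ => reads_add_itinerary

theorem iterate_T3_add
    (hx : Reads (T3 ε l c) (letter3 ε l c) (x + h) (itinerary (T3 ε l c) (letter3 ε l c) n x)) :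
    (T3 ε l c)^[n] (x + h) = (T3 ε l c)^[n] x + h := by
  have h_iterate := hx.iterate_T3
  rw [length_itinerary] at h_iterate
  rw [h_iterate, iterate_T3_eq_add_displacement (x := x)]
  ring

theorem ThreeIetLengths.eventually_letter3_add_nhdsGT (hL : ThreeIetLengths ε l) (c x : ℝ) :
    ∀ᶠ h in 𝓝[>] 0, letter3 ε l c (x + h) = letter3 ε l c x := by
  have hlim : Tendsto (x + ·) (𝓝[>] 0) (𝓝 x) :=
    tendsto_nhdsWithin_of_tendsto_nhds ((continuous_const_add x).tendsto' 0 x (add_zero x))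
  rcases hL.T3_cases c x with ⟨e, hx, -⟩ | ⟨e, hx, hx', -⟩ | ⟨e, hx, -⟩ <;> rw [e]
  · filter_upwards [hlim.eventually_lt_const hx] with h hh
    exact letter3_eq_zero_iff.2 hh
  · filter_upwards [hlim.eventually_lt_const hx', self_mem_nhdsWithin] with h hh hpos
    exact letter3_eq_one_iff.2 ⟨by linarith [mem_Ioi.1 hpos], hh⟩
  · filter_upwards [self_mem_nhdsWithin] with h hpos
    exact hL.letter3_eq_two_iff.2 (by linarith [mem_Ioi.1 hpos])

theorem ThreeIetLengths.eventually_letter3_add_nhds (hL : ThreeIetLengths ε l)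
    (hx₁ : x ≠ c + l - 1 + ε) (hx₂ : x ≠ c + ε) :
    ∀ᶠ h in 𝓝 0, letter3 ε l c (x + h) = letter3 ε l c x := by
  have hlim : Tendsto (x + ·) (𝓝 0) (𝓝 x) :=
    (continuous_const_add x).tendsto' 0 x (add_zero x)
  rcases hL.T3_cases c x with ⟨e, hx, -⟩ | ⟨e, hx, hx', -⟩ | ⟨e, hx, -⟩ <;> rw [e]
  · filter_upwards [hlim.eventually_lt_const hx] with h hh
    exact letter3_eq_zero_iff.2 hh
  · filter_upwards [hlim.eventually_lt_const hx',
      hlim.eventually_const_lt (lt_of_le_of_ne hx hx₁.symm)] with h hh hh'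
    exact letter3_eq_one_iff.2 ⟨hh'.le, hh⟩
  · filter_upwards [hlim.eventually_const_lt (lt_of_le_of_ne hx hx₂.symm)] with h hh
    exact hL.letter3_eq_two_iff.2 hh.le

theorem ThreeIetLengths.eventually_reads_add_nhdsGT (hL : ThreeIetLengths ε l) (c x : ℝ) (n : ℕ) :
    ∀ᶠ h in 𝓝[>] 0,
      Reads (T3 ε l c) (letter3 ε l c) (x + h) (itinerary (T3 ε l c) (letter3 ε l c) n x) :=
  eventually_reads_add_itinerary fun _ _ => hL.eventually_letter3_add_nhdsGT c _

theorem ThreeIetLengths.exists_bound_letter3_eq (hL : ThreeIetLengths ε l) (hε : Irrational ε)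
    (c : ℝ) (a : Fin 3) :
    ∃ N, ∀ x ∈ Ico c (c + l), ∃ m ≤ N, letter3 ε l c ((T3 ε l c)^[m] x) = a :=
  hL.exists_bound_of_eventually_nhdsGT hε (hL.leftEnd_mem a) (p := (letter3 ε l c · = a))
    ((hL.eventually_letter3_add_nhdsGT c _).mono fun _ h => h.trans (hL.letter3_leftEnd a))

end Continuity

section Exchange

variable {ε l c h : ℝ} {w : List (Fin 3)}

theorem ThreeIetLengths.T3_leftEnd_two (hL : ThreeIetLengths ε l) : T3 ε l c (c + ε) = c := by
  rw [T3_eq_add_translation, hL.letter3_eq_two_iff.2 le_rfl]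
  simp [translation]

theorem ThreeIetLengths.T3_leftEnd_zero (hL : ThreeIetLengths ε l) :
    T3 ε l c c = c + 1 - ε := by
  rw [T3_eq_add_translation, letter3_eq_zero_iff.2 (by linarith [hL.one_sub_lt])]
  simp only [translation, Matrix.cons_val]
  ring

theorem reads_one_cons_iff (hh : h ∈ Ioo (l - 1) 0) :
    Reads (T3 ε l c) (letter3 ε l c) (c + ε + h) (1 :: w) ↔
      Reads (T3 ε l c) (letter3 ε l c) (c + 1 - ε + h) w := by
  have h_letter : letter3 ε l c (c + ε + h) = 1 :=
    letter3_eq_one_iff.2 ⟨by linarith [hh.1], by linarith [hh.2]⟩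
  have h_step : T3 ε l c (c + ε + h) = c + 1 - ε + h := by
    rw [T3_eq_add_translation, h_letter]
    simp only [translation, Matrix.cons_val]
    ring
  rw [reads_cons, h_step, and_iff_right h_letter]

theorem ThreeIetLengths.reads_two_zero_cons_iff (hL : ThreeIetLengths ε l)
    (hh : h ∈ Ioo 0 (l - 1 + ε)) :
    Reads (T3 ε l c) (letter3 ε l c) (c + ε + h) (2 :: 0 :: w) ↔
      Reads (T3 ε l c) (letter3 ε l c) (c + 1 - ε + h) w := by
  have h_letter : letter3 ε l c (c + ε + h) = 2 := hL.letter3_eq_two_iff.2 (by linarith [hh.1])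
  have h_letter' : letter3 ε l c (c + h) = 0 := letter3_eq_zero_iff.2 (by linarith [hh.2])
  have h_step : T3 ε l c (c + ε + h) = c + h := by
    rw [T3_eq_add_translation, h_letter]
    simp only [translation, Matrix.cons_val]
    ring
  have h_step' : T3 ε l c (c + h) = c + 1 - ε + h := by
    rw [T3_eq_add_translation, h_letter']
    simp only [translation, Matrix.cons_val]
    ring
  rw [reads_cons, h_step, reads_cons, h_step', and_iff_right h_letter, and_iff_right h_letter']

theorem ThreeIetLengths.eventually_reads_add_preimage_leftEnd (hL : ThreeIetLengths ε l)
    (hε : Irrational ε) (hnd : l ∉ Zbr ε) {d : ℝ} {n : ℕ} (hd : (T3 ε l c)^[n] d = c + ε) :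
    ∀ᶠ h in 𝓝 0, Reads (T3 ε l c) (letter3 ε l c) (d + h)
      (itinerary (T3 ε l c) (letter3 ε l c) n d) :=
  eventually_reads_add_itinerary fun _ hi => hL.eventually_letter3_add_nhds
    (iterate_T3_ne_of_notMem_Zbr hnd hd)
    fun hi' => hi.ne (iterate_T3_injective hε d (hi'.trans hd.symm))

theorem ThreeIetLengths.eventually_reads_add_T3_leftEnd_zero (hL : ThreeIetLengths ε l)
    (hε : Irrational ε) (hnd : l ∉ Zbr ε) (c : ℝ) (n : ℕ) :
    ∀ᶠ h in 𝓝 0, Reads (T3 ε l c) (letter3 ε l c) (c + 1 - ε + h)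
      (itinerary (T3 ε l c) (letter3 ε l c) n (c + 1 - ε)) := by
  have h_orbit (i : ℕ) : (T3 ε l c)^[i] (c + 1 - ε) = (T3 ε l c)^[i + 2] (c + ε) := by
    rw [Function.iterate_add_apply, Function.iterate_succ_apply, hL.T3_leftEnd_two,
      Function.iterate_one, hL.T3_leftEnd_zero]
  refine eventually_reads_add_itinerary fun i _ => hL.eventually_letter3_add_nhds ?_ ?_ <;>
    rw [h_orbit]
  · exact iterate_T3_ne_of_notMem_Zbr (i := 0) hnd rfl
  · exact iterate_T3_ne_self hε (by lia)

/-- The exchange acts as one rotation on both sides of `c + ε`, except that an orbit passing to the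
right of this point takes two steps where one passing to the left takes a single step. -/
theorem ThreeIetLengths.exists_reads_one_and_reads_two_zero (hL : ThreeIetLengths ε l)
    (hε : Irrational ε) (hnd : l ∉ Zbr ε) (c : ℝ) (N : ℕ) :
    ∃ d ∈ Ioo c (c + l), ∃ w w' : List (Fin 3), w.length = N ∧ w'.length = N ∧
      (∀ᶠ h in 𝓝[<] 0, Reads (T3 ε l c) (letter3 ε l c) (d + h) (w ++ 1 :: w')) ∧
      ∀ᶠ h in 𝓝[>] 0, Reads (T3 ε l c) (letter3 ε l c) (d + h) (w ++ 2 :: 0 :: w') := by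
  obtain ⟨d, hd, hdN⟩ := hL.surjOn_T3.iterate N (hL.leftEnd_mem (c := c) 2)
  change (T3 ε l c)^[N] d = c + ε at hdN
  have hdc : d ≠ c := by
    rintro rfl
    have h_return : (T3 ε l d)^[N + 1] (d + ε) = d + ε := by
      rw [Function.iterate_succ_apply, hL.T3_leftEnd_two, hdN]
    exact iterate_T3_ne_self hε N.succ_ne_zero h_return
  have h_before := hL.eventually_reads_add_preimage_leftEnd hε hnd hdN
  have h_after := hL.eventually_reads_add_T3_leftEnd_zero hε hnd c N
  refine ⟨d, ⟨lt_of_le_of_ne hd.1 hdc.symm, hd.2⟩, itinerary (T3 ε l c) (letter3 ε l c) N d,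
    itinerary (T3 ε l c) (letter3 ε l c) N (c + 1 - ε), length_itinerary, length_itinerary, ?_, ?_⟩
  · filter_upwards [nhdsWithin_le_nhds h_before, nhdsWithin_le_nhds h_after,
      Ioo_mem_nhdsLT (sub_neg.2 hL.lt_one)] with h hw hw' hh
    rw [reads_append, length_itinerary, iterate_T3_add hw, hdN, reads_one_cons_iff hh]
    exact ⟨hw, hw'⟩
  · filter_upwards [nhdsWithin_le_nhds h_before, nhdsWithin_le_nhds h_after,
      Ioo_mem_nhdsGT (show 0 < l - 1 + ε by linarith [hL.one_sub_lt])] with h hw hw' hh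
    rw [reads_append, length_itinerary, iterate_T3_add hw, hdN, hL.reads_two_zero_cons_iff hh]
    exact ⟨hw, hw'⟩

theorem ThreeIetLengths.exists_bound_displacement_sub (hL : ThreeIetLengths ε l)
    (hε : Irrational ε) (c : ℝ) {δ : ℝ} (hδ : 0 < δ) :
    ∃ N, ∀ v a b v' : List (Fin 3), N ≤ v.length → N ≤ v'.length →
      ∀ x ∈ Ico c (c + l), ∀ y ∈ Ico c (c + l),
        Reads (T3 ε l c) (letter3 ε l c) x (v ++ (a ++ v')) →
        Reads (T3 ε l c) (letter3 ε l c) y (v ++ (b ++ v')) →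
          |displacement ε b - displacement ε a| < δ := by
  obtain ⟨N, hN⟩ := hL.exists_bound_dist_of_reads hε c (half_pos hδ)
  refine ⟨N, fun v a b v' hv hv' x hx y hy hxr hyr => ?_⟩
  simp only [reads_append] at hxr hyr
  obtain ⟨hxv, hxa, hxv'⟩ := hxr
  obtain ⟨hyv, hyb, hyv'⟩ := hyr
  have h_start := hN v hv x hx y hy hxv hyv
  have h_end := hN v' hv' _ (hL.mapsTo_T3.iterate _ (hL.mapsTo_T3.iterate _ hx)) _
    (hL.mapsTo_T3.iterate _ (hL.mapsTo_T3.iterate _ hy)) hxv' hyv'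
  rw [hxa.iterate_T3, hyb.iterate_T3, hxv.iterate_T3, hyv.iterate_T3] at h_end
  rw [abs_lt] at *
  constructor <;> linarith

end Exchange

section Orbit

variable {ε l c y ν : ℝ} {t : ℤ → ℝ} {k : ℤ → ℤ} {φ : Fin 3 → List (Fin 3)}

/-- A two-sided trajectory `t` of the three interval exchange with `t 0 = 0`; its coding
`letter3 ε l c ∘ t` is the 3iet word with parameters `ε`, `l`, `c`. -/
structure IsThreeIetOrbit (ε l c : ℝ) (t : ℤ → ℝ) : Prop where
  zero : t 0 = 0
  mem : ∀ n, t n ∈ Ico c (c + l)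
  semiconj : Function.Semiconj t (· + 1) (T3 ε l c)

theorem isThreeIetWord_iff {u : ℤ → Fin 3} :
    IsThreeIetWord ε l c u ↔ ∃ t, IsThreeIetOrbit ε l c t ∧ u = letter3 ε l c ∘ t := by
  constructor
  · rintro ⟨t, h0, hmem, hstep, hu⟩
    exact ⟨t, ⟨h0, hmem, hstep⟩, funext hu⟩
  · rintro ⟨t, ht, rfl⟩
    exact ⟨t, ht.zero, ht.mem, ht.semiconj, fun _ => rfl⟩

theorem IsThreeIetOrbit.zero_mem (ht : IsThreeIetOrbit ε l c t) : 0 ∈ Ico c (c + l) :=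
  ht.zero ▸ ht.mem 0

theorem IsThreeIetOrbit.apply_add_natCast (ht : IsThreeIetOrbit ε l c t) (n : ℤ) (m : ℕ) :
    t (n + m) = (T3 ε l c)^[m] (t n) := by
  simpa [add_right_iterate] using ht.semiconj.iterate_right m n

theorem IsThreeIetOrbit.injective (ht : IsThreeIetOrbit ε l c t) (hε : Irrational ε) :
    Function.Injective t :=
  .of_lt_imp_ne fun m n hmn h => by
    obtain ⟨d, rfl⟩ := Int.le.dest hmn.le
    exact iterate_T3_ne_self hε (show d ≠ 0 by lia) (ht.apply_add_natCast m d ▸ h.symm)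

theorem IsThreeIetOrbit.reads_iff (ht : IsThreeIetOrbit ε l c t) {n : ℤ} {w : List (Fin 3)} :
    Reads (· + 1) (letter3 ε l c ∘ t) n w ↔ Reads (T3 ε l c) (letter3 ε l c) (t n) w := by
  rw [Reads, Reads, itinerary_comp_of_semiconj ht.semiconj]

theorem IsThreeIetOrbit.exists_of_eventually_nhdsGT (ht : IsThreeIetOrbit ε l c t)
    (hL : ThreeIetLengths ε l) (hε : Irrational ε) (hy : y ∈ Ico c (c + l)) {p : ℝ → Prop}
    (hp : ∀ᶠ h in 𝓝[>] 0, p (y + h)) : ∃ n, p (t n) := by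
  obtain ⟨N, hN⟩ := hL.exists_bound_of_eventually_nhdsGT hε hy hp
  obtain ⟨n, -, hn⟩ := hN (t 0) (ht.mem 0)
  exact ⟨0 + n, by rwa [ht.apply_add_natCast]⟩

theorem IsThreeIetOrbit.exists_of_eventually_nhdsLT (ht : IsThreeIetOrbit ε l c t)
    (hL : ThreeIetLengths ε l) (hε : Irrational ε) (hy : y ∈ Ioc c (c + l)) {p : ℝ → Prop}
    (hp : ∀ᶠ h in 𝓝[<] 0, p (y + h)) : ∃ n, p (t n) := by
  obtain ⟨N, hN⟩ := hL.exists_bound_of_eventually_nhdsLT hε hy hp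
  obtain ⟨n, -, hn⟩ := hN (t 0) (ht.mem 0)
  exact ⟨0 + n, by rwa [ht.apply_add_natCast]⟩

theorem IsThreeIetOrbit.surjective_letter3_comp (ht : IsThreeIetOrbit ε l c t)
    (hL : ThreeIetLengths ε l) (hε : Irrational ε) :
    Function.Surjective (letter3 ε l c ∘ t) := by
  intro a
  obtain ⟨N, hN⟩ := hL.exists_bound_letter3_eq hε c a
  obtain ⟨n, -, hn⟩ := hN (t 0) (ht.mem 0)
  exact ⟨0 + n, by rwa [Function.comp_apply, ht.apply_add_natCast]⟩

theorem IsThreeIetOrbit.apply_add_one_eq_add_displacement (ht : IsThreeIetOrbit ε l c t)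
    (h : Renormalizes (· + 1) (letter3 ε l c ∘ t) φ univ k) (n : ℤ) :
    t (k (n + 1)) = t (k n) + displacement ε (φ (letter3 ε l c (t n))) := by
  have h_reads : Reads (T3 ε l c) (letter3 ε l c) (t (k n)) (φ (letter3 ε l c (t n))) :=
    ht.reads_iff.1 (h.reads n (mem_univ n))
  rw [← h_reads.iterate_T3, ← h.iterate_eq n (mem_univ n)]
  exact ht.semiconj.iterate_right _ _

theorem IsThreeIetOrbit.displacement_apply_one (ht : IsThreeIetOrbit ε l c t)
    (hL : ThreeIetLengths ε l) (hε : Irrational ε) (hnd : l ∉ Zbr ε)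
    (h : Renormalizes (· + 1) (letter3 ε l c ∘ t) φ univ k) :
    displacement ε (φ 1) = displacement ε (φ 2) + displacement ε (φ 0) := by
  by_contra hne
  obtain ⟨N, hN⟩ := hL.exists_bound_displacement_sub hε c (abs_pos.2 (sub_ne_zero.2 hne))
  obtain ⟨d, hd, w, w', hw, hw', hleft, hright⟩ :=
    hL.exists_reads_one_and_reads_two_zero hε hnd c N
  obtain ⟨m, hm⟩ := ht.exists_of_eventually_nhdsLT hL hε ⟨hd.1, hd.2.le⟩
    (p := fun x => Reads (T3 ε l c) (letter3 ε l c) x (w ++ 1 :: w')) hleft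
  obtain ⟨n, hn⟩ := ht.exists_of_eventually_nhdsGT hL hε ⟨hd.1.le, hd.2⟩
    (p := fun x => Reads (T3 ε l c) (letter3 ε l c) x (w ++ 2 :: 0 :: w')) hright
  have reads_image {n : ℤ} {v : List (Fin 3)} (hv : Reads (T3 ε l c) (letter3 ε l c) (t n) v) :
      Reads (T3 ε l c) (letter3 ε l c) (t (k n)) (substWord φ v) :=
    ht.reads_iff.1 (h.reads_substWord (mapsTo_univ _ _) (mem_univ n) (ht.reads_iff.2 hv))
  have h_close := hN (substWord φ w) (φ 2 ++ φ 0) (φ 1) (substWord φ w')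
    (hw.symm.le.trans (length_le_length_substWord h.ne_nil w))
    (hw'.symm.le.trans (length_le_length_substWord h.ne_nil w'))
    _ (ht.mem (k n)) _ (ht.mem (k m))
    (by simpa [substWord] using reads_image hn) (by simpa [substWord] using reads_image hm)
  exact (displacement_append (ε := ε) _ _ ▸ h_close).false

theorem IsThreeIetOrbit.exists_apply_eq_mul (ht : IsThreeIetOrbit ε l c t)
    (hL : ThreeIetLengths ε l) (hε : Irrational ε) (hnd : l ∉ Zbr ε)
    (h : Renormalizes (· + 1) (letter3 ε l c ∘ t) φ univ k) (hk : k 0 = 0) :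
    ∃ ν, ∀ n, t (k n) = ν * t n := by
  let ν := displacement ε (φ 0) - displacement ε (φ 2)
  let D := displacement ε (φ 0) * ε + displacement ε (φ 2) * (1 - ε)
  let F (n : ℤ) : ℝ := t (k n) - ν * t n
  have F_step (n : ℤ) : F (n + 1) - F n = D ∨ F (n + 1) - F n = 2 * D := by
    have hF : F (n + 1) - F n = displacement ε (φ (letter3 ε l c (t n))) -
        ν * translation ε (letter3 ε l c (t n)) := by
      simp only [F, ht.apply_add_one_eq_add_displacement h, ht.semiconj n,
        T3_eq_add_translation (x := t n)]
      ring
    have h_one := ht.displacement_apply_one hL hε hnd h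
    rw [hF]
    generalize letter3 ε l c (t n) = a
    fin_cases a <;> simp only [translation, ν, D, Fin.zero_eta, Fin.mk_one, Fin.reduceFinMk,
      Matrix.cons_val, h_one]
    exacts [Or.inl (by ring), Or.inr (by ring), Or.inl (by ring)]
  have F_bdd : BddAbove (range fun n : ℕ => D * F n) := by
    let M := max |c| |c + l|
    have abs_t_le (n : ℤ) : |t n| ≤ M := abs_le_max_abs_abs (ht.mem n).1 (ht.mem n).2.le
    refine ⟨|D| * (M + |ν| * M), ?_⟩
    rintro _ ⟨n, rfl⟩
    calc D * F n ≤ |D| * |F n| := (le_abs_self _).trans_eq (abs_mul _ _)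
      _ ≤ |D| * (|t (k n)| + |ν| * |t n|) := by gcongr; exact abs_mul ν _ ▸ abs_sub _ _
      _ ≤ |D| * (M + |ν| * M) := by gcongr <;> exact abs_t_le _
  have D_zero : D = 0 := by
    refine sq_nonpos_iff D |>.1 (nonpos_of_le_sub_of_bddAbove F_bdd fun n => ?_)
    push_cast
    rw [← mul_sub]
    rcases F_step n with e | e <;> rw [e] <;> nlinarith [sq_nonneg D]
  have F_periodic : Function.Periodic F 1 := fun n => by
    rcases F_step n with e | e <;> rw [D_zero] at e <;> linarith
  refine ⟨ν, fun n => sub_eq_zero.1 ?_⟩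
  simpa [F, hk, ht.zero] using F_periodic.int_mul_eq n

theorem IsThreeIetOrbit.renormalizes_mul (ht : IsThreeIetOrbit ε l c t)
    (hL : ThreeIetLengths ε l) (hε : Irrational ε) (hν : 0 < ν)
    (h : Renormalizes (· + 1) (letter3 ε l c ∘ t) φ univ k) (hk : ∀ n, t (k n) = ν * t n) :
    Renormalizes (T3 ε l c) (letter3 ε l c) φ (Ico c (c + l)) (ν * ·) := by
  have displacement_eq (n : ℤ) : displacement ε (φ (letter3 ε l c (t n))) =
      ν * translation ε (letter3 ε l c (t n)) := by
    have := ht.apply_add_one_eq_add_displacement h n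
    rw [hk, hk, ht.semiconj n, T3_eq_add_translation] at this
    linarith
  have exists_orbit_point {x : ℝ} (hx : x ∈ Ico c (c + l)) (N : ℕ) :
      ∃ n, letter3 ε l c (t n) = letter3 ε l c x ∧ Reads (T3 ε l c) (letter3 ε l c) (ν * t n)
        (itinerary (T3 ε l c) (letter3 ε l c) N (ν * x)) := by
    have hlim : Tendsto (ν * ·) (𝓝[>] 0) (𝓝[>] 0) :=
      tendsto_nhdsWithin_iff.2 ⟨tendsto_nhdsWithin_of_tendsto_nhds
        ((continuous_const_mul ν).tendsto' 0 0 (mul_zero ν)),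
        eventually_mem_nhdsWithin.mono fun _ => mul_pos hν⟩
    refine ht.exists_of_eventually_nhdsGT hL hε hx (p := fun y =>
      letter3 ε l c y = letter3 ε l c x ∧ Reads (T3 ε l c) (letter3 ε l c) (ν * y)
        (itinerary (T3 ε l c) (letter3 ε l c) N (ν * x))) ?_
    filter_upwards [hL.eventually_letter3_add_nhdsGT c x,
      hlim.eventually (hL.eventually_reads_add_nhdsGT c (ν * x) N)] with z h_letter h_reads
    exact ⟨h_letter, by rwa [mul_add]⟩
  have reads_image {x : ℝ} (hx : x ∈ Ico c (c + l)) :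
      Reads (T3 ε l c) (letter3 ε l c) (ν * x) (φ (letter3 ε l c x)) := by
    obtain ⟨n, h_letter, h_reads⟩ := exists_orbit_point hx (φ (letter3 ε l c x)).length
    have h_image := ht.reads_iff.1 (h.reads n (mem_univ n))
    rw [Function.comp_apply, h_letter, hk] at h_image
    rw [Reads, length_itinerary] at h_reads
    exact h_reads.symm.trans h_image
  refine ⟨h.ne_nil, fun x hx => reads_image hx, fun x hx => ?_⟩
  obtain ⟨n, h_letter, -⟩ := exists_orbit_point hx 0
  rw [(reads_image hx).iterate_T3, ← h_letter, displacement_eq, h_letter,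
    T3_eq_add_translation (x := x), mul_add]

theorem IsThreeIetOrbit.le_one_of_forall_mul_lt (ht : IsThreeIetOrbit ε l c t)
    (hL : ThreeIetLengths ε l) (hε : Irrational ε) (hν : ∀ n, ν * t n < c + l) : ν ≤ 1 := by
  by_contra! hlt
  have hlim : Tendsto (fun h => ν * (c + l + h)) (𝓝 0) (𝓝 (ν * (c + l))) :=
    (by fun_prop : Continuous fun h => ν * (c + l + h)).tendsto' 0 _ (by rw [add_zero])
  obtain ⟨n, hn⟩ := ht.exists_of_eventually_nhdsLT hL hε
    ⟨lt_add_of_pos_right c (hL.pos.trans hL.lt), le_rfl⟩ (p := fun y => c + l < ν * y)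
    (nhdsWithin_le_nhds (hlim.eventually_const_lt (lt_mul_of_one_lt_left ht.zero_mem.2 hlt)))
  exact (hν n).not_gt hn

theorem IsThreeIetOrbit.exists_renormalizes_mul (ht : IsThreeIetOrbit ε l c t)
    (hL : ThreeIetLengths ε l) (hε : Irrational ε) (hnd : l ∉ Zbr ε)
    (hprim : IsPrimitiveSubst φ) (h : Renormalizes (· + 1) (letter3 ε l c ∘ t) φ univ k)
    (hk : k 0 = 0) : ∃ ν ∈ Ioo (0 : ℝ) 1, ∃ φ : Fin 3 → List (Fin 3),
      Renormalizes (T3 ε l c) (letter3 ε l c) φ (Ico c (c + l)) (ν * ·) := by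
  obtain ⟨ν, hν⟩ := ht.exists_apply_eq_mul hL hε hnd h hk
  have hν2 (n : ℤ) : t (k (k n)) = ν ^ 2 * t n := by rw [hν, hν, sq, mul_assoc]
  have hν_ne_zero : ν ≠ 0 := by
    rintro rfl
    have : k 0 = k 1 := ht.injective hε (by simp only [hν, zero_mul])
    exact zero_ne_one (h.strictMono.injective this)
  have hν2_ne_one : ν ^ 2 ≠ 1 := by
    intro h_one
    have k_k (n : ℤ) : k (k n) = n := ht.injective hε (by rw [hν2, h_one, one_mul])
    have k_eq (n : ℤ) : k n = n := by
      rcases lt_trichotomy (k n) n with hlt | heq | hlt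
      · exact absurd (h.strictMono hlt) (by rw [k_k]; exact hlt.not_gt)
      · exact heq
      · exact absurd (h.strictMono hlt) (by rw [k_k]; exact hlt.not_gt)
    obtain ⟨a, ha⟩ := hprim.exists_length_ne_one
    obtain ⟨n, rfl⟩ := ht.surjective_letter3_comp hL hε a
    have := h.iterate_eq n (mem_univ n)
    simp only [add_right_iterate, k_eq] at this
    exact ha (by simpa using this)
  have hν2_le_one : ν ^ 2 ≤ 1 :=
    ht.le_one_of_forall_mul_lt hL hε fun n => hν2 n ▸ (ht.mem _).2
  exact ⟨ν ^ 2, ⟨by positivity, hν2_le_one.lt_of_ne hν2_ne_one⟩, _,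
    ht.renormalizes_mul hL hε (by positivity) (h.iterate (mapsTo_univ _ _) (mapsTo_univ _ _) 2) hν2⟩

theorem IsThreeIetOrbit.exists_renormalizes (ht : IsThreeIetOrbit ε l c t)
    (hL : ThreeIetLengths ε l) (hε : Irrational ε)
    (hν : MapsTo (ν * ·) (Ico c (c + l)) (Ico c (c + l)))
    (h : Renormalizes (T3 ε l c) (letter3 ε l c) φ (Ico c (c + l)) (ν * ·)) :
    ∃ k : ℤ → ℤ, k 0 = 0 ∧ Renormalizes (· + 1) (letter3 ε l c ∘ t) φ univ k := by
  have scaled_step (n : ℤ) :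
      (T3 ε l c)^[(φ (letter3 ε l c (t n))).length] (ν * t n) = ν * t (n + 1) := by
    rw [ht.semiconj n]
    exact h.iterate_eq _ (ht.mem n)
  have exists_index (n : ℤ) : ∃ m, t m = ν * t n := by
    induction n with
    | zero => exact ⟨0, by simp [ht.zero]⟩
    | succ n ih =>
      obtain ⟨m, hm⟩ := ih
      exact ⟨_, by rw [ht.apply_add_natCast m, hm, scaled_step]⟩
    | pred n ih =>
      obtain ⟨m, hm⟩ := ih
      let q := (φ (letter3 ε l c (t (-n - 1)))).length
      refine ⟨m - q, hL.injOn_T3.iterate hL.mapsTo_T3 q (ht.mem _) (hν (ht.mem _)) ?_⟩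
      rw [scaled_step, ← ht.apply_add_natCast, sub_add_cancel, sub_add_cancel, hm]
  choose k hk using exists_index
  refine ⟨k, ht.injective hε (by rw [hk, ht.zero, mul_zero]), h.ne_nil,
    fun n _ => ?_, fun n _ => ?_⟩
  · exact ht.reads_iff.2 (hk n ▸ h.reads _ (ht.mem n))
  · refine ht.injective hε ?_
    rw [hk (n + 1), ht.semiconj.iterate_right, hk]
    exact scaled_step n

end Orbit

section Scaling

variable {ε l c x w ν : ℝ} {i : ℕ} {φ : Fin 3 → List (Fin 3)}

theorem ThreeIetLengths.translation_ne_zero (hL : ThreeIetLengths ε l) (hε : Irrational ε)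
    (a : Fin 3) : translation ε a ≠ 0 := by
  have h_ne : T3 ε l 0 (leftEnd ε l 0 a) ≠ leftEnd ε l 0 a := iterate_T3_ne_self hε one_ne_zero
  rwa [T3_eq_add_translation, hL.letter3_leftEnd, Ne, add_eq_left] at h_ne

theorem mapsTo_mul_Ico {a b : ℝ} (h : 0 ∈ Ico a b) (hν : ν ∈ Icc 0 1) :
    MapsTo (ν * ·) (Ico a b) (Ico a b) :=
  fun _ hx => (convex_Ico a b).smul_mem_of_zero_mem h hx hν

theorem Renormalizes.displacement_apply (hL : ThreeIetLengths ε l)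
    (h : Renormalizes (T3 ε l c) (letter3 ε l c) φ (Ico c (c + l)) (ν * ·)) (a : Fin 3) :
    displacement ε (φ a) = ν * translation ε a := by
  have h_reads := h.reads _ (hL.leftEnd_mem a)
  have h_iterate := h.iterate_eq _ (hL.leftEnd_mem a)
  rw [h_reads.iterate_T3, T3_eq_add_translation, hL.letter3_leftEnd, mul_add] at h_iterate
  exact add_left_cancel h_iterate

theorem Renormalizes.isPrimitiveSubst (hL : ThreeIetLengths ε l) (hε : Irrational ε)
    (hν : ν ∈ Ioo 0 1) (hs : MapsTo (ν * ·) (Ico c (c + l)) (Ico c (c + l)))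
    (h : Renormalizes (T3 ε l c) (letter3 ε l c) φ (Ico c (c + l)) (ν * ·)) :
    IsPrimitiveSubst φ := by
  have h_iterate := h.iterate hL.mapsTo_T3 hs
  choose N hN using hL.exists_bound_letter3_eq hε c
  have displacement_iterate (a : Fin 3) (j : ℕ) :
      displacement ε ((substWord φ)^[j] [a]) = ν ^ j * translation ε a :=
    (mul_left_iterate ν j ▸ h_iterate j).displacement_apply hL a
  have iterate_injective (a : Fin 3) : Function.Injective fun j => (substWord φ)^[j] [a] :=
    fun i j hij => pow_right_injective₀ hν.1 hν.2.ne <|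
      mul_right_cancel₀ (hL.translation_ne_zero hε a) <| by
        simpa only [displacement_iterate] using congrArg (displacement ε) hij
  have eventually_long (a b : Fin 3) : ∀ᶠ j in atTop, N b < ((substWord φ)^[j] [a]).length := by
    rw [← Nat.cofinite_eq_atTop]
    filter_upwards [(iterate_injective a).tendsto_cofinite
      (List.finite_length_le (Fin 3) (N b)).compl_mem_cofinite] with j hj
    exact not_le.1 hj
  obtain ⟨j, hj, hj_one⟩ := ((eventually_all.2 fun a => eventually_all.2 (eventually_long a)).and
    (eventually_ge_atTop 1)).exists
  refine ⟨j, hj_one, fun a b => ?_⟩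
  have h_reads := (h_iterate j).reads _ (hL.leftEnd_mem a)
  rw [hL.letter3_leftEnd] at h_reads
  obtain ⟨m, hm, hmb⟩ := hN b _ (hs.iterate j (hL.leftEnd_mem a))
  exact hmb ▸ h_reads.mem_of_iterate (hm.trans_lt (hj a b))

theorem Renormalizes.letter3_iterate_leftEnd (hL : ThreeIetLengths ε l) (hν : 0 ≤ ν)
    (h : Renormalizes (T3 ε l c) (letter3 ε l c) φ (Ico c (c + l)) (ν * ·))
    (hx : x ∈ Ico c (c + l)) (hi : i < (φ (letter3 ε l c x)).length) :
    letter3 ε l c ((T3 ε l c)^[i] (ν * leftEnd ε l c (letter3 ε l c x))) =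
        letter3 ε l c ((T3 ε l c)^[i] (ν * x)) ∧
      (T3 ε l c)^[i] (ν * leftEnd ε l c (letter3 ε l c x)) ≤ (T3 ε l c)^[i] (ν * x) := by
  have h_reads := h.reads _ (hL.leftEnd_mem (letter3 ε l c x))
  rw [hL.letter3_leftEnd] at h_reads
  have same_letter := itinerary_eq_itinerary.1 (h_reads.trans (h.reads x hx).symm)
  refine ⟨same_letter i hi, ?_⟩
  rw [iterate_T3_eq_add_displacement, iterate_T3_eq_add_displacement (x := ν * x),
    itinerary_eq_itinerary.2 fun j hj => same_letter j (hj.trans hi)]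
  gcongr
  exact hL.leftEnd_letter3_le hx.1

/-- The coding of the floors of a tower is constant, so a point just to the right of `leftEnd b`
lies on a floor that starts exactly at `leftEnd b`. -/
theorem Renormalizes.nontrivial_setOf_iterate_eq_leftEnd (hL : ThreeIetLengths ε l)
    (hε : Irrational ε) (hν : 0 < ν) (hs : MapsTo (ν * ·) (Ico c (c + l)) (Ico c (c + l)))
    (h : Renormalizes (T3 ε l c) (letter3 ε l c) φ (Ico c (c + l)) (ν * ·))
    (hw : w ∈ Ico c (c + l))
    (hw' : (towerHeights (T3 ε l c) (letter3 ε l c) φ (Ico c (c + l)) (ν * ·) w).Nontrivial)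
    (b : Fin 3) :
    {a | ∃ i, (T3 ε l c)^[i] (ν * leftEnd ε l c a) = leftEnd ε l c b}.Nontrivial := by
  let floorStart (a : Fin 3) (i : ℕ) : ℝ := (T3 ε l c)^[i] (ν * leftEnd ε l c a)
  obtain ⟨N, hN⟩ := hL.exists_bound_of_eventually_nhdsGT hε (hL.leftEnd_mem b)
    (p := fun y => letter3 ε l c y = b ∧ ∀ a, ∀ i < (φ a).length,
      floorStart a i ≤ y → floorStart a i ≤ leftEnd ε l c b)
    (((hL.eventually_letter3_add_nhdsGT c _).mono fun _ h => h.trans (hL.letter3_leftEnd b)).and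
      (eventually_all.2 fun a => (eventually_all_finite (finite_lt_nat _)).2
        fun i _ => eventually_le_of_le_add _ _))
  obtain ⟨n, -, h_letter, h_floor⟩ := hN w hw
  have floorStart_eq {x : ℝ} {i : ℕ} (hx : x ∈ Ico c (c + l))
      (hi : i < (φ (letter3 ε l c x)).length) (hxw : (T3 ε l c)^[i] (ν * x) = (T3 ε l c)^[n] w) :
      floorStart (letter3 ε l c x) i = leftEnd ε l c b := by
    obtain ⟨same_letter, hle⟩ := h.letter3_iterate_leftEnd hL hν.le hx hi
    rw [hxw] at same_letter hle
    refine le_antisymm (h_floor _ i hi hle) ?_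
    rw [← h_letter, ← same_letter]
    exact hL.leftEnd_letter3_le (hL.mapsTo_T3.iterate i (hs (hL.leftEnd_mem _))).1
  obtain ⟨i, ⟨x, hx, hi, hxw⟩, j, ⟨y, hy, hj, hyw⟩, hij⟩ :=
    h.nontrivial_towerHeights_iterate hL.mapsTo_T3 hL.injOn_T3
      (mul_right_injective₀ hν.ne').injOn hw' n
  have hx_start := floorStart_eq hx hi hxw
  have hy_start := floorStart_eq hy hj hyw
  refine ⟨_, ⟨i, hx_start⟩, _, ⟨j, hy_start⟩, fun hxy => hij ?_⟩
  rw [hxy] at hx_start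
  exact iterate_T3_injective hε _ (hx_start.trans hy_start.symm)

/-- Otherwise the orbits of two of the three points `ν * leftEnd a` would hit each of the
discontinuities, hence one of these orbits would hit both. -/
theorem Renormalizes.not_nontrivial_towerHeights (hL : ThreeIetLengths ε l) (hε : Irrational ε)
    (hnd : l ∉ Zbr ε) (hν : 0 < ν) (hs : MapsTo (ν * ·) (Ico c (c + l)) (Ico c (c + l)))
    (h : Renormalizes (T3 ε l c) (letter3 ε l c) φ (Ico c (c + l)) (ν * ·))
    (hw : w ∈ Ico c (c + l)) :
    ¬ (towerHeights (T3 ε l c) (letter3 ε l c) φ (Ico c (c + l)) (ν * ·) w).Nontrivial := by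
  intro hw'
  have hits := h.nontrivial_setOf_iterate_eq_leftEnd hL hε hν hs hw hw'
  obtain ⟨a₁, ⟨i₁, hi₁⟩, a₂, ⟨i₂, hi₂⟩, ha⟩ := hits 2
  obtain ⟨b₁, ⟨j₁, hj₁⟩, b₂, ⟨j₂, hj₂⟩, hb⟩ := hits 1
  have meet : a₁ = b₁ ∨ a₁ = b₂ ∨ a₂ = b₁ ∨ a₂ = b₂ := by lia
  rcases meet with rfl | rfl | rfl | rfl
  exacts [iterate_T3_ne_of_notMem_Zbr hnd hi₁ hj₁, iterate_T3_ne_of_notMem_Zbr hnd hi₁ hj₂,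
    iterate_T3_ne_of_notMem_Zbr hnd hi₂ hj₁, iterate_T3_ne_of_notMem_Zbr hnd hi₂ hj₂]

theorem Renormalizes.isFirstReturn (hL : ThreeIetLengths ε l) (hε : Irrational ε)
    (hnd : l ∉ Zbr ε) (hν : 0 < ν) (hs : MapsTo (ν * ·) (Ico c (c + l)) (Ico c (c + l)))
    (h : Renormalizes (T3 ε l c) (letter3 ε l c) φ (Ico c (c + l)) (ν * ·))
    (hx : x ∈ Ico c (c + l)) :
    IsFirstReturn (T3 ε l c) ((ν * ·) '' Ico c (c + l)) (ν * x)
      (φ (letter3 ε l c x)).length := by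
  have length_pos (a : Fin 3) : 0 < (φ a).length := List.length_pos_of_ne_nil (h.ne_nil a)
  refine ⟨length_pos _, ⟨_, hL.mapsTo_T3 hx, (h.iterate_eq x hx).symm⟩, ?_⟩
  rintro m hm hlt ⟨y, hy, hym⟩
  exact h.not_nontrivial_towerHeights hL hε hnd hν hs (hs hy)
    ⟨0, ⟨y, hy, length_pos _, rfl⟩, m, ⟨x, hx, hlt, hym.symm⟩, by lia⟩

end Scaling

section ReturnNames

variable {ε l c ν : ℝ} {φ : Fin 3 → List (Fin 3)} {J : Set ℝ}

theorem mem_returnNames {w : List (Fin 3)} :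
    w ∈ returnNames ε l c J ↔ ∃ z ∈ J, ∃ n, IsFirstReturn (T3 ε l c) J z n ∧
      itinerary (T3 ε l c) (letter3 ε l c) n z = w := by
  simp only [returnNames, IsFirstReturn, and_assoc, mem_ofPred_eq, eq_comm (a := w)]
  rfl

theorem Renormalizes.returnNames_eq_range (hL : ThreeIetLengths ε l) (hε : Irrational ε)
    (hnd : l ∉ Zbr ε) (hν : 0 < ν) (hs : MapsTo (ν * ·) (Ico c (c + l)) (Ico c (c + l)))
    (h : Renormalizes (T3 ε l c) (letter3 ε l c) φ (Ico c (c + l)) (ν * ·)) :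
    returnNames ε l c ((ν * ·) '' Ico c (c + l)) = range φ := by
  ext w
  rw [mem_returnNames, exists_mem_image]
  constructor
  · rintro ⟨x, hx, n, hn, rfl⟩
    obtain rfl := hn.unique (h.isFirstReturn hL hε hnd hν hs hx)
    exact ⟨_, (h.reads x hx).symm⟩
  · rintro ⟨a, rfl⟩
    have hx := hL.leftEnd_mem (c := c) a
    refine ⟨_, hx, _, h.isFirstReturn hL hε hnd hν hs hx, ?_⟩
    rw [h.reads _ hx, hL.letter3_leftEnd]

theorem Renormalizes.apply_injective (hL : ThreeIetLengths ε l) (hν : ν ≠ 0)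
    (h : Renormalizes (T3 ε l c) (letter3 ε l c) φ (Ico c (c + l)) (ν * ·)) :
    Function.Injective φ := fun a b hab =>
  hL.translation_injective <| mul_left_cancel₀ hν <| by
    rw [← h.displacement_apply hL, ← h.displacement_apply hL, hab]

theorem ThreeIetLengths.exists_renormalizes_of_ncard_returnNames_le (hL : ThreeIetLengths ε l)
    (hν : ν ≠ 0)
    (hfin : (returnNames ε l c ((ν * ·) '' Ico c (c + l))).Finite)
    (hcard : (returnNames ε l c ((ν * ·) '' Ico c (c + l))).ncard ≤ 3)
    (h : ∀ x ∈ Ico c (c + l), ∃ n, IsFirstReturn (T3 ε l c) ((ν * ·) '' Ico c (c + l)) (ν * x) n ∧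
      (T3 ε l c)^[n] (ν * x) = ν * T3 ε l c x) :
    ∃ φ : Fin 3 → List (Fin 3),
      Renormalizes (T3 ε l c) (letter3 ε l c) φ (Ico c (c + l)) (ν * ·) := by
  choose! r hr hr_eq using h
  let name (x : ℝ) : List (Fin 3) := itinerary (T3 ε l c) (letter3 ε l c) (r x) (ν * x)
  have image_name : name '' Ico c (c + l) = returnNames ε l c ((ν * ·) '' Ico c (c + l)) := by
    ext w
    rw [mem_returnNames, exists_mem_image]
    refine exists_congr fun x => and_congr_right fun hx => ⟨fun hw => ⟨r x, hr x hx, hw⟩, ?_⟩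
    rintro ⟨n, hn, hw⟩
    rwa [hn.unique (hr x hx)] at hw
  have displacement_name {x : ℝ} (hx : x ∈ Ico c (c + l)) :
      displacement ε (name x) = ν * translation ε (letter3 ε l c x) := by
    have h_return := hr_eq x hx
    rw [iterate_T3_eq_add_displacement, T3_eq_add_translation (x := x), mul_add] at h_return
    exact add_left_cancel h_return
  obtain ⟨φ, hφ⟩ := exists_eqOn_comp_of_ncard_le (F := name) (g := letter3 ε l c)
    (image_name ▸ hfin) (by rwa [image_name, Fintype.card_fin])
    (fun a _ => ⟨_, hL.leftEnd_mem a, hL.letter3_leftEnd a⟩) fun x hx y hy hxy =>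
      hL.translation_injective <| mul_left_cancel₀ hν <| by
        rw [← displacement_name hx, ← displacement_name hy, hxy]
  have length_φ {x : ℝ} (hx : x ∈ Ico c (c + l)) : (φ (letter3 ε l c x)).length = r x :=
    (congrArg List.length (hφ hx)).symm.trans length_itinerary
  refine ⟨φ, fun a => ?_, fun x hx => ?_, fun x hx => ?_⟩
  · have hx := hL.leftEnd_mem (c := c) a
    rw [← List.length_pos_iff, ← hL.letter3_leftEnd (c := c) a, length_φ hx]
    exact (hr _ hx).1
  · have h_name : name x = φ (letter3 ε l c x) := hφ hx
    exact h_name ▸ reads_itinerary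
  · rw [length_φ hx, hr_eq x hx]

theorem ThreeIetLengths.exists_renormalizes_mul_iff (hL : ThreeIetLengths ε l) (hε : Irrational ε)
    (hnd : l ∉ Zbr ε) (hν : 0 < ν) (hs : MapsTo (ν * ·) (Ico c (c + l)) (Ico c (c + l))) :
    (∃ φ : Fin 3 → List (Fin 3),
      Renormalizes (T3 ε l c) (letter3 ε l c) φ (Ico c (c + l)) (ν * ·)) ↔
    (∀ x ∈ Ico (ν * c) (ν * (c + l)),
      (∃ n : ℕ, 1 ≤ n ∧ (T3 ε l c)^[n] x ∈ Ico (ν * c) (ν * (c + l))) ∧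
      ∀ n : ℕ, 1 ≤ n → (T3 ε l c)^[n] x ∈ Ico (ν * c) (ν * (c + l)) →
        (∀ m : ℕ, 1 ≤ m → m < n → (T3 ε l c)^[m] x ∉ Ico (ν * c) (ν * (c + l))) →
        (T3 ε l c)^[n] x = ν * T3 ε l c (x / ν)) ∧
    (returnNames ε l c (Ico (ν * c) (ν * (c + l)))).ncard = 3 := by
  rw [← image_mul_left_Ico hν]
  simp only [exists_isFirstReturn_and_eq_iff, forall_mem_image, mul_div_cancel_left₀ _ hν.ne']
  constructor
  · rintro ⟨φ, h⟩
    refine ⟨fun x hx => ⟨_, h.isFirstReturn hL hε hnd hν hs hx, h.iterate_eq x hx⟩, ?_⟩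
    rw [h.returnNames_eq_range hL hε hnd hν hs, ← image_univ,
      ncard_image_of_injective _ (h.apply_injective hL hν.ne'), ncard_univ, Nat.card_fin]
  · rintro ⟨h_return, h_card⟩
    exact hL.exists_renormalizes_of_ncard_returnNames_le hν.ne'
      (finite_of_ncard_ne_zero (by lia)) h_card.le fun x hx => h_return hx

theorem IsThreeIetOrbit.exists_isFixedPointSubstZ_iff {t : ℤ → ℝ} (ht : IsThreeIetOrbit ε l c t)
    (hL : ThreeIetLengths ε l) (hε : Irrational ε) (hnd : l ∉ Zbr ε) :
    (∃ φ : Fin 3 → List (Fin 3), (∀ a, φ a ≠ []) ∧ IsPrimitiveSubst φ ∧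
      IsFixedPointSubstZ φ (letter3 ε l c ∘ t)) ↔
    ∃ ν ∈ Ioo (0 : ℝ) 1, ∃ φ : Fin 3 → List (Fin 3),
      Renormalizes (T3 ε l c) (letter3 ε l c) φ (Ico c (c + l)) (ν * ·) := by
  constructor
  · rintro ⟨φ, hφ, hprim, hfix⟩
    obtain ⟨k, hk, h⟩ := (isFixedPointSubstZ_iff_renormalizes hφ).1 hfix
    exact ht.exists_renormalizes_mul hL hε hnd hprim h hk
  · rintro ⟨ν, hν, φ, h⟩
    have hs := mapsTo_mul_Ico ht.zero_mem (Ioo_subset_Icc_self hν)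
    exact ⟨φ, h.ne_nil, h.isPrimitiveSubst hL hε hν hs,
      (isFixedPointSubstZ_iff_renormalizes h.ne_nil).2 (ht.exists_renormalizes hL hε hs h)⟩

end ReturnNames

theorem threeIet_subst_invariant_iff_returnInterval (ε l c : ℝ) (u : ℤ → Fin 3)
    (hε : Irrational ε) (hεm : ε ∈ Set.Ioo (0 : ℝ) 1)
    (hl₁ : max ε (1 - ε) < l) (hl₂ : l < 1) (hc₁ : c ≤ 0) (hc₂ : 0 < c + l)
    (hnd : l ∉ Zbr ε) (hu : IsThreeIetWord ε l c u) :
    (∃ φ : Fin 3 → List (Fin 3), (∀ a, φ a ≠ []) ∧ IsPrimitiveSubst φ ∧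
        IsFixedPointSubstZ φ u) ↔
    ∃ ν ∈ Set.Ioo (0 : ℝ) 1,
      -- P1: the first return map of J = [νc, ν(c+l)) is homothetic with T
      (∀ x ∈ Set.Ico (ν * c) (ν * (c + l)),
        (∃ n : ℕ, 1 ≤ n ∧ (T3 ε l c)^[n] x ∈ Set.Ico (ν * c) (ν * (c + l))) ∧
        ∀ n : ℕ, 1 ≤ n → (T3 ε l c)^[n] x ∈ Set.Ico (ν * c) (ν * (c + l)) →
          (∀ m : ℕ, 1 ≤ m → m < n → (T3 ε l c)^[m] x ∉ Set.Ico (ν * c) (ν * (c + l))) →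
          (T3 ε l c)^[n] x = ν * T3 ε l c (x / ν)) ∧
      -- P2: the set of return names defined by J has exactly three elements
      (returnNames ε l c (Set.Ico (ν * c) (ν * (c + l)))).ncard = 3 := by
  have hL : ThreeIetLengths ε l :=
    ⟨(le_max_left _ _).trans_lt hl₁, (le_max_right _ _).trans_lt hl₁, hl₂⟩
  obtain ⟨t, ht, rfl⟩ := isThreeIetWord_iff.1 hu
  rw [ht.exists_isFixedPointSubstZ_iff hL hε hnd]
  exact exists_congr fun ν => and_congr_right fun hν =>
    hL.exists_renormalizes_mul_iff hε hnd hν.1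
      (mapsTo_mul_Ico ht.zero_mem (Ioo_subset_Icc_self hν))
end

section
/- Let ε be an irrational real number, let M be a 3×3 matrix with integer entries, and let Λ, Λ′ be real numbers with Λ + Λ′ ∈ ℤ, Λ·Λ′ ∈ {1, −1}, and M · (1−ε, 1−2ε, −ε)ᵀ = Λ′ · (1−ε, 1−2ε, −ε)ᵀ. Then Λ·ℤ[ε] = Λ′·ℤ[ε] = ℤ[ε], where Λ·ℤ[ε] := {Λz : z ∈ ℤ[ε]}. -/
/-!
The entries of the vector `(1 - ε, 1 - 2ε, -ε)` generate the additive group `ℤ[ε]`, so an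
eigenvalue `Λ'` of an integer matrix with this eigenvector maps `ℤ[ε]` into itself. Since `Λ + Λ'`
is an integer, so does `Λ`, and since `Λ * Λ' = ±1`, each of the two maps is inverse to the other up
to sign, hence onto.
-/

open Set Submodule
open scoped Pointwise

section StableSubmodules

theorem smul_span_range_le_of_sum_smul_eq {α S V ι : Type*} [Monoid α] [Semiring S]
    [AddCommMonoid V] [Module S V] [DistribMulAction α V] [SMulCommClass α S V] [Fintype ι]
    {M : Matrix ι ι S} {v : ι → V} {a : α} (h : ∀ i, ∑ j, M i j • v j = a • v i) :
    a • span S (range v) ≤ span S (range v) := by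
  rw [smul_span, span_le]
  rintro _ ⟨_, ⟨i, rfl⟩, rfl⟩
  change a • v i ∈ span S (range v)
  rw [← h i]
  exact sum_mem fun j _ ↦ smul_mem _ (M i j) (subset_span (mem_range_self j))

theorem le_smul_of_mul_eq_algebraMap_unit {S B V : Type*} [CommSemiring S] [Semiring B]
    [Algebra S B] [AddCommMonoid V] [Module S V] [Module B V] [IsScalarTower S B V]
    {N : Submodule S V} {a b : B} {u : Sˣ} (hab : a * b = algebraMap S B u) (hb : b • N ≤ N) :
    N ≤ a • N := by
  intro x hx
  have hbx : b • u⁻¹ • x ∈ N := hb (smul_mem_pointwise_smul _ b N (N.smul_mem _ hx))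
  have hax : a • b • u⁻¹ • x = x := by
    rw [← mul_smul, hab, algebraMap_smul, ← Units.smul_def, smul_inv_smul]
  exact hax ▸ smul_mem_pointwise_smul _ a N hbx

variable {S B V : Type*} [CommRing S] [Ring B] [Algebra S B] [AddCommGroup V] [Module S V]
  [Module B V] [IsScalarTower S B V]

theorem smul_le_of_add_eq_algebraMap {N : Submodule S V} {a b : B} {s : S}
    (hab : a + b = algebraMap S B s) (hb : b • N ≤ N) : a • N ≤ N := by
  rintro _ ⟨x, hx, rfl⟩
  change a • x ∈ N
  rw [eq_sub_of_add_eq hab, sub_smul, algebraMap_smul]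
  exact sub_mem (N.smul_mem s hx) (hb (smul_mem_pointwise_smul x b N hx))

theorem smul_eq_and_smul_eq_of_add_mul_eq_algebraMap {N : Submodule S V} {a b : B} {s : S} {u : Sˣ}
    (hadd : a + b = algebraMap S B s) (hmul : a * b = algebraMap S B u) (hb : b • N ≤ N) :
    a • N = N ∧ b • N = N := by
  have hcomm : b * a = a * b := by
    rw [eq_sub_of_add_eq hadd, sub_mul, mul_sub, Algebra.commutes]
  have ha : a • N ≤ N := smul_le_of_add_eq_algebraMap hadd hb
  exact ⟨ha.antisymm (le_smul_of_mul_eq_algebraMap_unit hmul hb),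
    hb.antisymm (le_smul_of_mul_eq_algebraMap_unit (hcomm.trans hmul) ha)⟩

end StableSubmodules

theorem span_range_one_sub_eq_span_pair (S : Type*) {B : Type*} [Ring S] [Ring B] [Module S B]
    (ε : B) : span S (range ![1 - ε, 1 - 2 * ε, -ε]) = span S {1, ε} := by
  apply le_antisymm <;> rw [span_le]
  · have h_one : (1 : B) ∈ span S {1, ε} := subset_span (by simp)
    have hε : ε ∈ span S {1, ε} := subset_span (by simp)
    rintro _ ⟨i, rfl⟩
    fin_cases i
    · exact sub_mem h_one hε
    · simpa [two_mul] using sub_mem h_one (add_mem hε hε)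
    · exact neg_mem hε
  · have h_first : 1 - ε ∈ span S (range ![1 - ε, 1 - 2 * ε, -ε]) := subset_span ⟨0, rfl⟩
    have h_last : -ε ∈ span S (range ![1 - ε, 1 - 2 * ε, -ε]) := subset_span ⟨2, rfl⟩
    rintro _ (rfl | rfl)
    · simpa using sub_mem h_first h_last
    · simpa using neg_mem h_last

theorem coe_span_pair_eq_Zbr (ε : ℝ) : (span ℤ {1, ε} : Set ℝ) = Zbr ε := by
  ext x
  simp [Zbr, mem_span_pair, eq_comm]

theorem eigenvalue_preserves_Zbr_general (ε : ℝ) (M : Matrix (Fin 3) (Fin 3) ℤ) (Λ Λ' : ℝ)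
    (hsum : ∃ m : ℤ, Λ + Λ' = (m : ℝ)) (hprod : Λ * Λ' = 1 ∨ Λ * Λ' = -1)
    (heig : (M.map (Int.cast : ℤ → ℝ)).mulVec ![1 - ε, 1 - 2 * ε, -ε]
      = Λ' • ![1 - ε, 1 - 2 * ε, -ε]) :
    (fun z => Λ * z) '' Zbr ε = Zbr ε ∧ (fun z => Λ' * z) '' Zbr ε = Zbr ε := by
  obtain ⟨m, hm⟩ := hsum
  obtain ⟨u, hu⟩ : ∃ u : ℤˣ, Λ * Λ' = algebraMap ℤ ℝ u :=
    hprod.elim (fun h ↦ ⟨1, by simpa using h⟩) (fun h ↦ ⟨-1, by simpa using h⟩)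
  have hΛ' : Λ' • span ℤ {1, ε} ≤ span ℤ {1, ε} := by
    rw [← span_range_one_sub_eq_span_pair]
    exact smul_span_range_le_of_sum_smul_eq (M := M) fun i ↦ by
      simpa [Matrix.mulVec, dotProduct] using congrFun heig i
  simpa only [SetLike.ext'_iff, coe_pointwise_smul, coe_span_pair_eq_Zbr, ← image_smul,
    smul_eq_mul] using smul_eq_and_smul_eq_of_add_mul_eq_algebraMap hm hu hΛ'

theorem eigenvalue_preserves_Zbr (ε : ℝ) (hε : Irrational ε)
    (M : Matrix (Fin 3) (Fin 3) ℤ) (Λ Λ' : ℝ)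
    (hsum : ∃ m : ℤ, Λ + Λ' = (m : ℝ)) (hprod : Λ * Λ' = 1 ∨ Λ * Λ' = -1)
    (heig : (M.map (Int.cast : ℤ → ℝ)).mulVec ![1 - ε, 1 - 2 * ε, -ε]
      = Λ' • ![1 - ε, 1 - 2 * ε, -ε]) :
    (fun z => Λ * z) '' Zbr ε = Zbr ε ∧ (fun z => Λ' * z) '' Zbr ε = Zbr ε :=
  eigenvalue_preserves_Zbr_general ε M Λ Λ' hsum hprod heig
end

section
/- Let ε be a quadratic irrational with conjugate ε′, and let Λ = p + qε with p, q ∈ ℚ, with conjugate Λ′ = p + qε′, satisfy Λ·Λ′ ∈ {1, −1} and Λ·ℤ[ε] = ℤ[ε]. Then for every half-open interval Ω = [c, c+l) with l > 0, Λ · Σ_{ε,−ε′}(Ω) = Σ_{ε,−ε′}(Λ′·Ω), where Λ·S := {Λx : x ∈ S} and Λ′·Ω := {Λ′x : x ∈ Ω}. -/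
/-- The cut-and-project set `Σ_{ε,η}(Ω) = {a + bη : a, b ∈ ℤ, a − bε ∈ Ω}`. -/
def cutProject (ε η : ℝ) (Ω : Set ℝ) : Set ℝ :=
  {x | ∃ a b : ℤ, x = (a : ℝ) + (b : ℝ) * η ∧ (a : ℝ) - (b : ℝ) * ε ∈ Ω}

/-!
The point `a - bε'` is the conjugate of `a - bε`, so `Σ_{ε,-ε'}(Ω)` is the conjugate of
`ℤ[ε] ∩ Ω`, and scaling the former by `Λ` amounts to scaling the latter by `Λ'`. The lattice `ℤ[ε]`
is stable under `Λ'` as well as under `Λ`, because `Λ' = tr Λ - Λ` and `tr Λ` is an integer, being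
the trace of multiplication by `Λ` on `ℤ[ε]`. Since `ε` is irrational, all of this can be carried
out in the abstract quadratic algebra `ℚ[ω]`, where conjugation is a ring automorphism.
-/

open QuadraticAlgebra
open scoped Pointwise

section ModelSet

/-- The general cut-and-project set: the points of `M` whose internal coordinate `φ` lies in the
window `Ω`, projected to physical space by `ψ`. -/
def modelSet {K G N : Type*} (φ : K → G) (ψ : K → N) (M : Set K) (Ω : Set G) : Set N :=
  ψ '' (M ∩ φ ⁻¹' Ω)

variable {K G N F F' : Type*} [Monoid K] [GroupWithZero G] [Monoid N]
  [FunLike F K G] [MonoidHomClass F K G] [FunLike F' K N] [MonoidHomClass F' K N]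

theorem smul_inter_preimage (φ : F) {z : K} (hz : φ z ≠ 0) (M : Set K) (Ω : Set G) :
    z • (M ∩ φ ⁻¹' Ω) = z • M ∩ φ ⁻¹' (φ z • Ω) := by
  have mem_iff (m : K) : z • m ∈ φ ⁻¹' (φ z • Ω) ↔ m ∈ φ ⁻¹' Ω := by
    rw [Set.mem_preimage, smul_eq_mul, map_mul, ← smul_eq_mul, Set.smul_mem_smul_set_iff₀ hz,
      Set.mem_preimage]
  ext x
  constructor
  · rintro ⟨m, ⟨hm, hmΩ⟩, rfl⟩
    exact ⟨Set.smul_mem_smul_set hm, (mem_iff m).2 hmΩ⟩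
  · rintro ⟨⟨m, hm, rfl⟩, hmΩ⟩
    exact Set.smul_mem_smul_set ⟨hm, (mem_iff m).1 hmΩ⟩

theorem smul_modelSet (φ : F) (ψ : F') {z : K} (hz : φ z ≠ 0) {M : Set K} (hM : z • M = M)
    (Ω : Set G) : ψ z • modelSet φ ψ M Ω = modelSet φ ψ M (φ z • Ω) := by
  rw [modelSet, ← Set.image_smul_distrib, smul_inter_preimage φ hz, hM, modelSet]

end ModelSet

section OmegaLattice

variable {R : Type*} [CommRing R] {a b : R}

/-- The lattice `ℤ + ℤω` in a quadratic algebra. It is only an additive subgroup, since `ω ^ 2`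
need not have integral coordinates. -/
def omegaLattice (a b : R) : AddSubgroup (QuadraticAlgebra R a b) :=
  AddSubgroup.closure {1, ω}

theorem mem_omegaLattice {z : QuadraticAlgebra R a b} :
    z ∈ omegaLattice a b ↔ ∃ m n : ℤ, z = ⟨m, n⟩ := by
  have hmk (m n : ℤ) : m • (1 : QuadraticAlgebra R a b) + n • ω = ⟨m, n⟩ := by
    ext <;> simp
  simp only [omegaLattice, AddSubgroup.mem_closure_pair, hmk, eq_comm]

theorem one_mem_omegaLattice : (1 : QuadraticAlgebra R a b) ∈ omegaLattice a b :=
  AddSubgroup.subset_closure (Set.mem_insert _ _)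

theorem omega_mem_omegaLattice : (ω : QuadraticAlgebra R a b) ∈ omegaLattice a b :=
  AddSubgroup.subset_closure (Set.mem_insert_of_mem _ rfl)

theorem exists_trace_eq_intCast_of_smul_omegaLattice_le {z : QuadraticAlgebra R a b}
    (hz : z • omegaLattice a b ≤ omegaLattice a b) : ∃ t : ℤ, trace z = t := by
  obtain ⟨m, _, hm⟩ := mem_omegaLattice.1
    (hz (AddSubgroup.smul_mem_pointwise_smul _ z _ one_mem_omegaLattice))
  obtain ⟨_, n, hn⟩ := mem_omegaLattice.1
    (hz (AddSubgroup.smul_mem_pointwise_smul _ z _ omega_mem_omegaLattice))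
  have hre : z.re = m := by simpa using congrArg re hm
  have him : z.re + b * z.im = n := by simpa using congrArg im hn
  refine ⟨m + n, ?_⟩
  rw [trace_def, Int.cast_add, ← hre, ← him]
  ring

theorem star_smul_omegaLattice_le {z : QuadraticAlgebra R a b}
    (hz : z • omegaLattice a b ≤ omegaLattice a b) :
    star z • omegaLattice a b ≤ omegaLattice a b := by
  obtain ⟨t, ht⟩ := exists_trace_eq_intCast_of_smul_omegaLattice_le hz
  rintro _ ⟨w, hw, rfl⟩
  have hmul : star z * w = t • w - z * w := by
    rw [star_eq, ht, map_intCast, sub_mul, zsmul_eq_mul]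
  change star z * w ∈ omegaLattice a b
  rw [hmul]
  exact sub_mem (zsmul_mem hw t) (hz (AddSubgroup.smul_mem_pointwise_smul _ z _ hw))

theorem isUnit_of_smul_omegaLattice_eq {z : QuadraticAlgebra R a b}
    (hz : z • omegaLattice a b = omegaLattice a b) : IsUnit z := by
  obtain ⟨w, -, hzw⟩ := hz.ge one_mem_omegaLattice
  exact .of_mul_eq_one w hzw

theorem star_smul_omegaLattice_eq {z : QuadraticAlgebra R a b}
    (hz : z • omegaLattice a b = omegaLattice a b) :
    star z • omegaLattice a b = omegaLattice a b := by
  obtain ⟨u, rfl⟩ := isUnit_of_smul_omegaLattice_eq hz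
  have hinv : (↑u⁻¹ : QuadraticAlgebra R a b) • omegaLattice a b = omegaLattice a b := by
    conv_lhs => rw [← hz, smul_smul, Units.inv_mul, one_smul]
  refine le_antisymm (star_smul_omegaLattice_le hz.le) ?_
  calc omegaLattice a b
      = star (u : QuadraticAlgebra R a b) • star (↑u⁻¹ : QuadraticAlgebra R a b) •
          omegaLattice a b := by
        rw [smul_smul, ← star_mul, Units.inv_mul, star_one, one_smul]
    _ ≤ star (u : QuadraticAlgebra R a b) • omegaLattice a b :=
        AddSubgroup.map_mono (star_smul_omegaLattice_le hinv.le)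

end OmegaLattice

section RealEmbedding

variable {a b : ℚ} (φ : QuadraticAlgebra ℚ a b →ₐ[ℚ] ℝ)

theorem algHom_mk (p q : ℚ) : φ ⟨p, q⟩ = p + q * φ ω := by
  simp only [mk_eq_add_smul_omega, map_add, map_smul, Rat.smul_def, AlgHom.commutes,
    eq_ratCast]

theorem algHom_mk_intCast (m n : ℤ) : φ ⟨m, n⟩ = m + n * φ ω := by
  rw [algHom_mk, Rat.cast_intCast, Rat.cast_intCast]

variable {φ} in
theorem algHom_injective_of_irrational (hφ : Irrational (φ ω)) : Function.Injective φ := by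
  refine (injective_iff_map_eq_zero φ).2 fun ⟨p, q⟩ hz ↦ ?_
  rw [algHom_mk] at hz
  have hq : q = 0 := by
    by_contra hq
    exact ((hφ.ratCast_mul hq).ratCast_add p).ne_zero hz
  have hp : p = 0 := by simpa [hq] using hz
  rw [hp, hq]
  rfl

theorem image_omegaLattice : φ '' omegaLattice a b = Zbr (φ ω) := by
  ext x
  simp only [Set.mem_image, SetLike.mem_coe, mem_omegaLattice, Zbr, Set.mem_ofPred_eq]
  constructor
  · rintro ⟨_, ⟨m, n, rfl⟩, rfl⟩
    exact ⟨m, n, algHom_mk_intCast φ m n⟩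
  · rintro ⟨m, n, rfl⟩
    exact ⟨_, ⟨m, n, rfl⟩, algHom_mk_intCast φ m n⟩

/-- The conjugate of the embedding `φ`, sending `ω` to the conjugate of `φ ω`. -/
noncomputable def conjEmbedding : QuadraticAlgebra ℚ a b →ₐ[ℚ] ℝ :=
  ((φ : QuadraticAlgebra ℚ a b →+* ℝ).comp (starRingEnd _)).toRatAlgHom

theorem conjEmbedding_apply (z : QuadraticAlgebra ℚ a b) : conjEmbedding φ z = φ (star z) := rfl

theorem conjEmbedding_omega : conjEmbedding φ ω = b - φ ω := by
  rw [conjEmbedding_apply, star_eq, trace_omega, map_sub, AlgHom.commutes, eq_ratCast]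

theorem cutProject_eq_modelSet (Ω : Set ℝ) :
    cutProject (φ ω) (-conjEmbedding φ ω) Ω =
      modelSet φ (conjEmbedding φ) (omegaLattice a b) Ω := by
  ext x
  constructor
  · rintro ⟨m, n, rfl, hΩ⟩
    refine ⟨⟨m, (-n : ℤ)⟩, ⟨mem_omegaLattice.2 ⟨m, -n, rfl⟩, ?_⟩, ?_⟩
    · rwa [Set.mem_preimage, algHom_mk_intCast, Int.cast_neg, neg_mul, ← sub_eq_add_neg]
    · rw [algHom_mk_intCast, Int.cast_neg, neg_mul, mul_neg]
  · rintro ⟨_, ⟨hm, hΩ⟩, rfl⟩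
    obtain ⟨m, n, rfl⟩ := mem_omegaLattice.1 hm
    rw [Set.mem_preimage, algHom_mk_intCast] at hΩ
    refine ⟨m, -n, ?_, ?_⟩
    · rw [algHom_mk_intCast, Int.cast_neg, neg_mul_neg]
    · rwa [Int.cast_neg, neg_mul, sub_neg_eq_add]

variable {φ} in
theorem smul_cutProject (hφ : Irrational (φ ω)) {z : QuadraticAlgebra ℚ a b}
    (hz : φ z • Zbr (φ ω) = Zbr (φ ω)) (Ω : Set ℝ) :
    φ z • cutProject (φ ω) (-conjEmbedding φ ω) Ω =
      cutProject (φ ω) (-conjEmbedding φ ω) (conjEmbedding φ z • Ω) := by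
  have hlattice : z • omegaLattice a b = omegaLattice a b := by
    apply SetLike.coe_injective
    apply (algHom_injective_of_irrational hφ).image_injective
    rw [AddSubgroup.coe_pointwise_smul, Set.image_smul_distrib, image_omegaLattice, hz]
  have hstar : star z • omegaLattice a b = omegaLattice a b :=
    star_smul_omegaLattice_eq hlattice
  have hne : φ (star z) ≠ 0 := ((isUnit_of_smul_omegaLattice_eq hstar).map φ).ne_zero
  have hscale := smul_modelSet φ (conjEmbedding φ) hne (congrArg SetLike.coe hstar) Ω
  rwa [conjEmbedding_apply, star_star, ← conjEmbedding_apply, ← cutProject_eq_modelSet,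
    ← cutProject_eq_modelSet] at hscale

end RealEmbedding

theorem unit_scales_cutProject_general (ε : ℝ) (A B C : ℤ) (hA : A ≠ 0) (hε : Irrational ε)
    (hquad : (A : ℝ) * ε ^ 2 + (B : ℝ) * ε + (C : ℝ) = 0) (p q : ℚ)
    (hZ : (fun z => ((p : ℝ) + (q : ℝ) * ε) * z) '' Zbr ε = Zbr ε) (Ω : Set ℝ) :
    (fun x => ((p : ℝ) + (q : ℝ) * ε) * x) '' cutProject ε (-(-(B : ℝ) / (A : ℝ) - ε)) Ω
      = cutProject ε (-(-(B : ℝ) / (A : ℝ) - ε))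
          ((fun x => ((p : ℝ) + (q : ℝ) * (-(B : ℝ) / (A : ℝ) - ε)) * x) '' Ω) := by
  have hA' : (A : ℝ) ≠ 0 := Int.cast_ne_zero.2 hA
  have hroot : ε * ε = (-C / A : ℚ) • (1 : ℝ) + (-B / A : ℚ) • ε := by
    simp only [Rat.smul_def]
    push_cast
    field_simp
    linear_combination hquad
  let φ := lift ⟨ε, hroot⟩
  have hω : φ ω = ε := by simp [φ]
  have hω' : conjEmbedding φ ω = -B / A - ε := by
    rw [conjEmbedding_omega, hω]
    push_cast
    rfl
  have hΛ : φ ⟨p, q⟩ = p + q * ε := by rw [algHom_mk, hω]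
  have hΛ' : conjEmbedding φ ⟨p, q⟩ = p + q * (-B / A - ε) := by rw [algHom_mk, hω']
  have hscale := smul_cutProject (φ := φ) (z := ⟨p, q⟩) (by rwa [hω]) (by rwa [hΛ, hω]) Ω
  rwa [hω, hω', hΛ, hΛ'] at hscale

theorem unit_scales_cutProject (ε : ℝ) (A B C : ℤ) (hA : A ≠ 0) (hε : Irrational ε)
    (hquad : (A : ℝ) * ε ^ 2 + (B : ℝ) * ε + (C : ℝ) = 0) (p q : ℚ)
    (hunit : ((p : ℝ) + (q : ℝ) * ε) * ((p : ℝ) + (q : ℝ) * (-(B : ℝ) / (A : ℝ) - ε)) = 1 ∨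
             ((p : ℝ) + (q : ℝ) * ε) * ((p : ℝ) + (q : ℝ) * (-(B : ℝ) / (A : ℝ) - ε)) = -1)
    (hZ : (fun z => ((p : ℝ) + (q : ℝ) * ε) * z) '' Zbr ε = Zbr ε) :
    ∀ c l : ℝ, 0 < l →
      (fun x => ((p : ℝ) + (q : ℝ) * ε) * x) ''
          cutProject ε (-(-(B : ℝ) / (A : ℝ) - ε)) (Set.Ico c (c + l))
        = cutProject ε (-(-(B : ℝ) / (A : ℝ) - ε))
            ((fun x => ((p : ℝ) + (q : ℝ) * (-(B : ℝ) / (A : ℝ) - ε)) * x) ''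
              Set.Ico c (c + l)) :=
  fun c l _ ↦ unit_scales_cutProject_general ε A B C hA hε hquad p q hZ (Set.Ico c (c + l))
end
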